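/- arXiv:1307.1288 — 3 statements merged into one kernel-verified Lean document; each statement's English description precedes it below -/
import Mathlib

section
/- Let V : [0,∞) → ℝ be a right-continuous function with left limits, of finite variation on every compact interval, with canonical decomposition V = V^c + V^d into its continuous part V^c and pure-jump part V^d. For every t > 0 and every Borel set A ⊆ ℝ, the signed occupation measure satisfies θ_t(A) = ∫_0^t 1_A(V(s)) V^c(ds) = ∫_A ℓ^x(t) dx; i.e., θ_t(dx) is absolutely continuous with respect to Lebesgue measure with density x ↦ ℓ^x(t). -/
open MeasureTheory Set Filter
open scoped ENNReal NNReal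

noncomputable section

/-- `V` increases through the level `x` at time `t`: `t > 0`, `V t = x`, `V` is continuous
at `t` (within the domain `[0,∞)`), and `V s - V t` has the same sign as `s - t` for all
`s ≥ 0` in some neighborhood of `t`. -/
def IncreasesThrough (V : ℝ → ℝ) (x t : ℝ) : Prop :=
  0 < t ∧ V t = x ∧ ContinuousWithinAt V (Set.Ici 0) t ∧
    ∃ ε > 0, ∀ s ∈ Set.Ici (0 : ℝ), |s - t| < ε →
      ((s < t → V s < V t) ∧ (t < s → V t < V s))

/-- `V` decreases through the level `x` at time `t` iff `-V` increases through `-x` at `t`. -/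
def DecreasesThrough (V : ℝ → ℝ) (x t : ℝ) : Prop :=
  IncreasesThrough (fun s => -V s) (-x) t

/-- `(0,t] ∩ ℐ(x)`: the increasing passage times of `V` through `x` up to time `t`. -/
def incSet (V : ℝ → ℝ) (x t : ℝ) : Set ℝ :=
  {s | s ∈ Set.Ioc 0 t ∧ IncreasesThrough V x s}

/-- `(0,t] ∩ 𝒟(x)`: the decreasing passage times of `V` through `x` up to time `t`. -/
def decSet (V : ℝ → ℝ) (x t : ℝ) : Set ℝ :=
  {s | s ∈ Set.Ioc 0 t ∧ DecreasesThrough V x s}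

/-- The signed local time `ℓ^x(t) = Card((0,t] ∩ ℐ(x)) − Card((0,t] ∩ 𝒟(x))`
(meaningful when both sets are finite). -/
def signedLocalTime (V : ℝ → ℝ) (x t : ℝ) : ℤ :=
  ((incSet V x t).ncard : ℤ) - ((decSet V x t).ncard : ℤ)

/-- The absolute local time `λ^x(t) = Card((0,t] ∩ ℐ(x)) + Card((0,t] ∩ 𝒟(x))`
(meaningful when both sets are finite). -/
def absLocalTime (V : ℝ → ℝ) (x t : ℝ) : ℕ :=
  (incSet V x t).ncard + (decSet V x t).ncard

/-- The integral `∫_A f dμ` of `f` against a signed measure `μ`, defined through the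
Jordan decomposition `μ = μ⁺ - μ⁻`. -/
def signedIntegral {Ω : Type*} [MeasurableSpace Ω] (μ : MeasureTheory.SignedMeasure Ω)
    (A : Set Ω) (f : Ω → ℝ) : ℝ :=
  ∫ ω in A, f ω ∂μ.toJordanDecomposition.posPart -
    ∫ ω in A, f ω ∂μ.toJordanDecomposition.negPart

/-!
On `(0, t]` consider the side of a level `x` on which `V` lies, as a step function of time. For
almost every `x` it changes only finitely often: by `+1` at an increasing passage, by `-1` at a
decreasing one, and by `±1` at a jump which straddles `x`. Indeed almost every level is attained
finitely often (Banach indicatrix), only countably many levels are extremal values, and the sizes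
of the jumps are summable. Telescoping over `(a, b]` shows that `1_{x < V b} - 1_{x < V a}` is the
number of increasing minus the number of decreasing passages in `(a, b]`, plus the sum of
`1_{x < V s} - 1_{x < V s-}` over the jump times `s ∈ (a, b]`; integrating over `x` turns the left
side into `V b - V a` and the jump terms into `V^d b - V^d a`. So the signed counting measure of the
passages through `x`, integrated over `x`, is `V^c(ds)` on every interval, hence on every Borel set
by a π-λ argument dominated by the indicatrix. To the set of times `s` with `V s ∈ A` it assigns
`1_A(x) ℓ^x(t)`, because `V` equals `x` at each of its passages through `x`.
-/

open scoped Topology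

section Order

variable {α β : Type*}

theorem eq_of_eventuallyEq_nhdsLT_nhdsGT [ConditionallyCompleteLinearOrder α] [TopologicalSpace α]
    [OrderTopology α] [DenselyOrdered α] {f : α → β} {a b : α} (hab : a ≤ b)
    (hleft : ∀ r ∈ Ioc a b, ∀ᶠ u in 𝓝[<] r, f u = f r)
    (hright : ∀ r ∈ Ico a b, ∀ᶠ u in 𝓝[>] r, f u = f r) : f a = f b := by
  refine (isPreconnected_Icc (a := a) (b := b)).induction₂ (fun x y => f x = f y) ?_
    (fun _ _ _ _ _ _ => Eq.trans) (fun _ _ _ _ => Eq.symm)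
    (left_mem_Icc.2 hab) (right_mem_Icc.2 hab)
  intro r hr
  rw [← Icc_union_Icc_eq_Icc hr.1 hr.2, nhdsWithin_union, eventually_sup]
  constructor
  · rcases hr.1.eq_or_lt with rfl | har
    · simp
    · rw [nhdsWithin_Icc_eq_nhdsLE har, ← Iio_insert, nhdsWithin_insert, eventually_sup]
      exact ⟨rfl, (hleft r ⟨har, hr.2⟩).mono fun _ => Eq.symm⟩
  · rcases hr.2.eq_or_lt with rfl | hrb
    · simp
    · rw [nhdsWithin_Icc_eq_nhdsGE hrb, ← Ioi_insert, nhdsWithin_insert, eventually_sup]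
      exact ⟨rfl, (hright r ⟨hr.1, hrb⟩).mono fun _ => Eq.symm⟩

/-- The step function with a jump of size `w s` at each `s ∈ E`. -/
def stepFunction [LinearOrder α] [AddCommGroup β] (E : Finset α) (w : α → β) (r : α) : β :=
  ∑ s ∈ E, if s ≤ r then w s else 0

theorem stepFunction_eventuallyEq_nhdsLT [LinearOrder α] [TopologicalSpace α]
    [OrderClosedTopology α] [AddCommGroup β] (E : Finset α) (w : α → β) (r : α) :
    ∀ᶠ u in 𝓝[<] r, stepFunction E w u = stepFunction E w r - if r ∈ E then w r else 0 := by
  have hlt : ∀ᶠ u in 𝓝[<] r, ∀ s ∈ E, s < r → s < u :=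
    (eventually_all_finset E).2 fun s _ => eventually_imp_distrib_left.2 fun hs =>
      (eventually_gt_nhds hs).filter_mono nhdsWithin_le_nhds
  filter_upwards [hlt, self_mem_nhdsWithin] with u hu (hur : u < r)
  rw [← Finset.sum_ite_eq E r, stepFunction, stepFunction, ← Finset.sum_sub_distrib]
  refine Finset.sum_congr rfl fun s hs => ?_
  rcases lt_trichotomy s r with hsr | rfl | hrs
  · simp [hsr.le, (hu s hs hsr).le, hsr.ne']
  · simp [hur]
  · simp [hrs.not_ge, (hur.trans hrs).not_ge, hrs.ne]

theorem stepFunction_eventuallyEq_nhdsGT [LinearOrder α] [TopologicalSpace α]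
    [OrderClosedTopology α] [AddCommGroup β] (E : Finset α) (w : α → β) (r : α) :
    ∀ᶠ u in 𝓝[>] r, stepFunction E w u = stepFunction E w r := by
  have hlt : ∀ᶠ u in 𝓝[>] r, ∀ s ∈ E, r < s → u < s :=
    (eventually_all_finset E).2 fun s _ => eventually_imp_distrib_left.2 fun hs =>
      (eventually_lt_nhds hs).filter_mono nhdsWithin_le_nhds
  filter_upwards [hlt, self_mem_nhdsWithin] with u hu (hru : r < u)
  refine Finset.sum_congr rfl fun s hs => ?_
  rcases le_or_gt s r with hsr | hrs
  · simp [hsr, hsr.trans hru.le]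
  · simp [hrs.not_ge, (hu s hs hrs).not_ge]

theorem sub_eq_finsum_sub_leftValue [ConditionallyCompleteLinearOrder α] [TopologicalSpace α]
    [OrderTopology α] [DenselyOrdered α] [AddCommGroup β] {h hL : α → β} {a b : α} (hab : a ≤ b)
    (hfin : (Ioc a b ∩ Function.support fun s => h s - hL s).Finite)
    (hleft : ∀ r ∈ Ioc a b, ∀ᶠ u in 𝓝[<] r, h u = hL r)
    (hright : ∀ r ∈ Ico a b, ∀ᶠ u in 𝓝[>] r, h u = h r) :
    h b - h a = ∑ᶠ s ∈ Ioc a b, (h s - hL s) := by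
  classical
  set E := hfin.toFinset with hE
  have mem_E : ∀ {s}, s ∈ E ↔ s ∈ Ioc a b ∧ h s - hL s ≠ 0 := by simp [hE]
  let J := stepFunction E fun s => h s - hL s
  have J_left : ∀ r ∈ Ioc a b, ∀ᶠ u in 𝓝[<] r, J u = J r - (h r - hL r) := fun r hr => by
    have hE_jump : (if r ∈ E then h r - hL r else 0) = h r - hL r :=
      ite_eq_left_iff.2 fun hrE => by_contra fun hne => hrE (mem_E.2 ⟨hr, Ne.symm hne⟩)
    simpa only [hE_jump] using stepFunction_eventuallyEq_nhdsLT E (fun s => h s - hL s) r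
  have key : h a - J a = h b - J b := by
    refine eq_of_eventuallyEq_nhdsLT_nhdsGT (f := fun r => h r - J r) hab ?_ ?_
    · intro r hr
      filter_upwards [hleft r hr, J_left r hr] with u hu hJu
      rw [hu, hJu]; abel
    · intro r hr
      filter_upwards [hright r hr, stepFunction_eventuallyEq_nhdsGT E (fun s => h s - hL s) r]
        with u hu hJu
      rw [hu]; exact congrArg _ hJu
  have J_a : J a = 0 := Finset.sum_eq_zero fun s hs => if_neg (mem_E.1 hs).1.1.not_ge
  have J_b : J b = ∑ᶠ s ∈ Ioc a b, (h s - hL s) := by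
    rw [finsum_mem_eq_sum _ hfin]
    exact Finset.sum_congr rfl fun s hs => if_pos (mem_E.1 hs).1.2
  rw [← J_b, sub_eq_iff_eq_add, ← sub_eq_iff_eq_add', ← key, J_a, sub_zero]

theorem countable_image_isLocalExtr [TopologicalSpace α] [SecondCountableTopology α]
    [PartialOrder β] (f : α → β) : (f '' {s | IsLocalExtr f s}).Countable := by
  let 𝓑 := TopologicalSpace.countableBasis α
  have h𝓑 := TopologicalSpace.countable_countableBasis α
  have hext : ∀ U : Set α, {y | IsLeast (f '' U) y ∨ IsGreatest (f '' U) y}.Countable := fun U =>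
    .union (Subsingleton.countable fun _ hy _ hz => IsLeast.unique hy hz)
      (Subsingleton.countable fun _ hy _ hz => IsGreatest.unique hy hz)
  refine (h𝓑.biUnion fun U _ => hext U).mono ?_
  rintro _ ⟨s, hs, rfl⟩
  have hnhds : ∀ {P : α → Prop}, (∀ᶠ u in 𝓝 s, P u) → ∃ U ∈ 𝓑, s ∈ U ∧ ∀ u ∈ U, P u := fun hP =>
    (TopologicalSpace.isBasis_countableBasis α).mem_nhds_iff.1 hP
  rcases hs with hmin | hmax
  · obtain ⟨U, hU, hsU, hle⟩ := hnhds hmin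
    exact mem_biUnion hU (.inl ⟨mem_image_of_mem f hsU, forall_mem_image.2 hle⟩)
  · obtain ⟨U, hU, hsU, hle⟩ := hnhds hmax
    exact mem_biUnion hU (.inr ⟨mem_image_of_mem f hsU, forall_mem_image.2 hle⟩)

theorem eventually_lt_iff_of_tendsto [LinearOrder β] [TopologicalSpace β]
    [OrderClosedTopology β] {f : α → β} {l : Filter α} {x y : β} (hf : Tendsto f l (𝓝 y))
    (hxy : y ≠ x) : ∀ᶠ u in l, (x < f u ↔ x < y) := by
  rcases hxy.lt_or_gt with h | h
  · filter_upwards [hf.eventually_lt_const h] with u hu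
    simp [hu.not_gt, h.not_gt]
  · filter_upwards [hf.eventually_const_lt h] with u hu
    simp [hu, h]

theorem eventually_eventually_nhdsGT_iff [LinearOrder α] [TopologicalSpace α] [OrderTopology α]
    [DenselyOrdered α] [NoMaxOrder α] {s : Set α} (hs : IsOpen s) {r : α} [(𝓝[s] r).NeBot]
    {P : α → Prop} (h : (∀ᶠ u in 𝓝[s] r, P u) ∨ ∀ᶠ u in 𝓝[s] r, ¬P u) :
    ∀ᶠ u in 𝓝[s] r, ((∀ᶠ v in 𝓝[>] u, P v) ↔ ∀ᶠ v in 𝓝[s] r, P v) := by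
  have hnear : ∀ {Q : α → Prop}, (∀ᶠ u in 𝓝[s] r, Q u) → ∀ᶠ u in 𝓝[s] r, ∀ᶠ v in 𝓝[>] u, Q v := by
    intro Q hQ
    filter_upwards [eventually_eventually_nhdsWithin.2 hQ, self_mem_nhdsWithin] with u hu hus
    rw [hs.nhdsWithin_eq hus] at hu
    exact hu.filter_mono nhdsWithin_le_nhds
  rcases h with h | h
  · exact (hnear h).mono fun u hu => iff_of_true hu h
  · exact (hnear h).mono fun u hu => iff_of_false (fun hP => (hP.and hu).exists.elim fun _ hv =>
      hv.2 hv.1) fun hP => (hP.and h).exists.elim fun _ hv => hv.2 hv.1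

end Order

section BanachIndicatrix

variable {α β ι : Type*}

theorem card_le_sum_indicator_of_image_subset {f : α → β} {y : β} (F : Finset α)
    (K : Finset ι) {cell : ι → Set α} {S : ι → Set β} (hF : ∀ s ∈ F, f s = y)
    (hcover : ∀ s ∈ F, ∃ k ∈ K, s ∈ cell k)
    (hsep : ∀ k ∈ K, (↑F ∩ cell k).Subsingleton) (hS : ∀ k, f '' cell k ⊆ S k) :
    (F.card : ℝ≥0∞) ≤ ∑ k ∈ K, (S k).indicator 1 y := by
  classical
  have hcard : F.card ≤ {k ∈ K | y ∈ S k}.card := by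
    refine Finset.card_le_card_of_forall_subsingleton (fun s k => s ∈ cell k) (fun s hs => ?_)
      (fun k hk => hsep k (Finset.mem_filter.1 hk).1)
    obtain ⟨k, hk, hsk⟩ := hcover s hs
    exact ⟨k, Finset.mem_filter.2 ⟨hk, hS k ⟨s, hsk, hF s hs⟩⟩, hsk⟩
  simp only [indicator_apply, Pi.one_apply, Finset.sum_boole]
  exact_mod_cast hcard

/-- The points cutting `[a, b]` into `n + 1` intervals of equal length. -/
def uniformPartition (a b : ℝ) (n k : ℕ) : ℝ := a + k * ((b - a) / (n + 1))

theorem uniformPartition_monotone {a b : ℝ} (hab : a ≤ b) (n : ℕ) :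
    Monotone (uniformPartition a b n) := fun k l hkl => by
  have := sub_nonneg.2 hab
  unfold uniformPartition
  gcongr

theorem uniformPartition_zero (a b : ℝ) (n : ℕ) : uniformPartition a b n 0 = a := by
  simp [uniformPartition]

theorem uniformPartition_last (a b : ℝ) (n : ℕ) : uniformPartition a b n (n + 1) = b := by
  unfold uniformPartition
  push_cast
  field_simp
  ring

theorem dist_le_of_mem_uniformPartition {a b : ℝ} {n k : ℕ} {s s' : ℝ}
    (hs : s ∈ Icc (uniformPartition a b n k) (uniformPartition a b n (k + 1)))
    (hs' : s' ∈ Icc (uniformPartition a b n k) (uniformPartition a b n (k + 1))) :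
    dist s s' ≤ (b - a) / (n + 1) := by
  refine (Real.dist_le_of_mem_Icc hs hs').trans_eq ?_
  unfold uniformPartition
  push_cast
  ring

theorem volume_image_le_eVariationOn [LinearOrder α] (f : α → ℝ) (s : Set α) :
    volume (f '' s) ≤ eVariationOn f s := by
  refine (Real.volume_le_diam _).trans (Metric.ediam_le ?_)
  rintro _ ⟨u, hu, rfl⟩ _ ⟨v, hv, rfl⟩
  exact eVariationOn.edist_le f hu hv

/-- A measurable majorant of the number of intervals of the `n`-th uniform partition of `[a, b]`
whose image under `f` contains `x`. -/
def partitionIndicatrix (f : ℝ → ℝ) (a b : ℝ) (n : ℕ) (x : ℝ) : ℝ≥0∞ :=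
  ∑ k ∈ Finset.range (n + 1), (toMeasurable volume
    (f '' Icc (uniformPartition a b n k) (uniformPartition a b n (k + 1)))).indicator 1 x

theorem measurable_partitionIndicatrix (f : ℝ → ℝ) (a b : ℝ) (n : ℕ) :
    Measurable (partitionIndicatrix f a b n) :=
  Finset.measurable_fun_sum _ fun _ _ => measurable_one.indicator (measurableSet_toMeasurable _ _)

theorem lintegral_partitionIndicatrix_le (f : ℝ → ℝ) {a b : ℝ} (hab : a ≤ b) (n : ℕ) :
    ∫⁻ x, partitionIndicatrix f a b n x ≤ eVariationOn f (Icc a b) := by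
  simp only [partitionIndicatrix]
  rw [lintegral_finsetSum _ fun k _ => measurable_one.indicator (measurableSet_toMeasurable _ _)]
  calc ∑ k ∈ Finset.range (n + 1), ∫⁻ x, (toMeasurable volume
          (f '' Icc (uniformPartition a b n k) (uniformPartition a b n (k + 1)))).indicator 1 x
      ≤ ∑ k ∈ Finset.range (n + 1), eVariationOn f
          (Icc (uniformPartition a b n k) (uniformPartition a b n (k + 1))) := by
        refine Finset.sum_le_sum fun k _ => ?_
        rw [lintegral_indicator_one (measurableSet_toMeasurable _ _), measure_toMeasurable]
        exact volume_image_le_eVariationOn f _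
    _ = eVariationOn f (Icc a b) := by
        rw [eVariationOn.sum' f (uniformPartition_monotone hab n), uniformPartition_zero,
          uniformPartition_last]

theorem eventually_card_le_partitionIndicatrix (f : ℝ → ℝ) {a b x : ℝ} {F : Finset ℝ}
    (hF : ↑F ⊆ Ioc a b ∩ f ⁻¹' {x}) :
    ∀ᶠ n in atTop, (F.card : ℝ≥0∞) ≤ partitionIndicatrix f a b n x := by
  have hmesh : Tendsto (fun n : ℕ => (b - a) / ((n : ℝ) + 1)) atTop (𝓝 0) :=
    tendsto_const_div_atTop_nhds_zero_nat (b - a) |>.comp (tendsto_add_atTop_nat 1) |>.congr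
      fun n => by simp
  have hfine : ∀ᶠ n : ℕ in atTop, ∀ s ∈ F, ∀ s' ∈ F, s ≠ s' → (b - a) / (n + 1) < dist s s' := by
    refine (eventually_all_finset F).2 fun s _ => (eventually_all_finset F).2 fun s' _ => ?_
    exact eventually_imp_distrib_left.2 fun hne => hmesh.eventually_lt_const (dist_pos.2 hne)
  filter_upwards [hfine] with n hn
  refine card_le_sum_indicator_of_image_subset F _ (f := f) (fun s hs => (hF hs).2) ?_ ?_
    (fun k => subset_toMeasurable _ _)
  · intro s hs
    have hs' : s ∈ Ioc (uniformPartition a b n 0) (uniformPartition a b n (n + 1)) := by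
      rw [uniformPartition_zero, uniformPartition_last]; exact (hF hs).1
    obtain ⟨k, hk, hsk⟩ := mem_iUnion₂.1 (Ioc_subset_biUnion_Ioc _ (uniformPartition a b n) hs')
    exact ⟨k, hk, Ioc_subset_Icc_self hsk⟩
  · intro k _ s hs s' hs'
    by_contra hne
    exact (hn s hs.1 s' hs'.1 hne).not_ge (dist_le_of_mem_uniformPartition hs.2 hs'.2)

theorem exists_measurable_encard_le_lintegral_le_eVariationOn (f : ℝ → ℝ) {a b : ℝ}
    (hab : a ≤ b) :
    ∃ g : ℝ → ℝ≥0∞, Measurable g ∧ ∫⁻ x, g x ≤ eVariationOn f (Icc a b) ∧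
      ∀ x, ((Ioc a b ∩ f ⁻¹' {x}).encard : ℝ≥0∞) ≤ g x := by
  refine ⟨fun x => liminf (fun n => partitionIndicatrix f a b n x) atTop,
    .liminf (measurable_partitionIndicatrix f a b), ?_, fun x => ?_⟩
  · refine (lintegral_liminf_le (measurable_partitionIndicatrix f a b)).trans ?_
    exact liminf_le_of_frequently_le'
      (Frequently.of_forall (lintegral_partitionIndicatrix_le f hab))
  · have hfin : ∀ F : Finset ℝ, ↑F ⊆ Ioc a b ∩ f ⁻¹' {x} →
        (F.card : ℝ≥0∞) ≤ liminf (fun n => partitionIndicatrix f a b n x) atTop := fun F hF =>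
      le_liminf_of_le (by isBoundedDefault) (eventually_card_le_partitionIndicatrix f hF)
    by_cases hS : (Ioc a b ∩ f ⁻¹' {x}).Finite
    · rw [hS.encard_eq_coe_toFinset_card]
      exact_mod_cast hfin hS.toFinset hS.coe_toFinset.subset
    · refine le_top.trans (ENNReal.eq_top_of_forall_nnreal_le fun r => ?_).ge
      obtain ⟨n, hn⟩ := exists_nat_ge r
      obtain ⟨F, hF, rfl⟩ := Set.Infinite.exists_subset_card_eq hS n
      exact le_trans (by exact_mod_cast hn) (hfin F hF)

theorem exists_integrable_ncard_le_of_boundedVariationOn {f : ℝ → ℝ} {a b : ℝ} (hab : a ≤ b)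
    (hf : BoundedVariationOn f (Icc a b)) :
    ∃ g : ℝ → ℝ, Integrable g ∧
      ∀ᵐ x, (Ioc a b ∩ f ⁻¹' {x}).Finite ∧ ((Ioc a b ∩ f ⁻¹' {x}).ncard : ℝ) ≤ g x := by
  obtain ⟨g, hg, hg_int, hcard⟩ := exists_measurable_encard_le_lintegral_le_eVariationOn f hab
  have hg_ne : ∫⁻ x, g x ≠ ∞ := ne_top_of_le_ne_top hf hg_int
  refine ⟨fun x => (g x).toReal, integrable_toReal_of_lintegral_ne_top hg.aemeasurable hg_ne, ?_⟩
  filter_upwards [ae_lt_top hg hg_ne] with x hx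
  have hS : (Ioc a b ∩ f ⁻¹' {x}).Finite := by
    rw [← encard_lt_top_iff]
    exact_mod_cast (hcard x).trans_lt hx
  refine ⟨hS, ?_⟩
  have hx_card := ENNReal.toReal_mono hx.ne (hcard x)
  rwa [← hS.cast_ncard_eq, ENat.toENNReal_coe, ENNReal.toReal_natCast] at hx_card

end BanachIndicatrix

section VectorMeasure

variable {X Ω E : Type*} [MeasurableSpace X] [NormedAddCommGroup E]

/-- The vector measure with an atom of mass `w s` at each point `s`. It is only meaningful when
`w` has finite support, the finite sum being zero otherwise. -/
def atomicMeasure [MeasurableSpace Ω] (w : Ω → E) : VectorMeasure Ω E :=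
  ∑ᶠ s, VectorMeasure.dirac s (w s)

theorem atomicMeasure_apply [MeasurableSpace Ω] {w : Ω → E} (hw : w.support.Finite) {B : Set Ω}
    (hB : MeasurableSet B) : atomicMeasure w B = ∑ᶠ s ∈ B, w s := by
  classical
  have hdirac : ∀ s, VectorMeasure.dirac s (w s) B = if s ∈ B then w s else 0 := fun s => by
    split_ifs with hs
    · exact VectorMeasure.dirac_apply_of_mem hB hs
    · exact VectorMeasure.dirac_apply_of_notMem hs
  have hsupp : (fun s => VectorMeasure.dirac s (w s)).support ⊆ hw.toFinset := by
    intro s hs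
    simp only [Finite.coe_toFinset, Function.mem_support] at hs ⊢
    exact fun h0 => hs (by rw [h0, VectorMeasure.dirac_zero])
  rw [atomicMeasure, finsum_eq_sum_of_support_subset _ hsupp, FunLike.coe_sum, Finset.sum_apply,
    finsum_mem_def, finsum_eq_sum_of_support_subset (s := hw.toFinset)]
  · simp only [hdirac, indicator_apply]
  · simp

theorem norm_atomicMeasure_le [MeasurableSpace Ω] {w : Ω → E} (hw : w.support.Finite)
    (hw1 : ∀ s, ‖w s‖ ≤ 1) (B : Set Ω) : ‖atomicMeasure w B‖ ≤ w.support.ncard := by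
  by_cases hB : MeasurableSet B
  · have hBw : (B ∩ w.support).Finite := hw.subset inter_subset_right
    rw [atomicMeasure_apply hw hB, finsum_mem_eq_sum _ hBw]
    calc ‖∑ s ∈ hBw.toFinset, w s‖ ≤ ∑ s ∈ hBw.toFinset, 1 :=
          norm_sum_le_of_le _ fun s _ => hw1 s
      _ = ((B ∩ w.support).ncard : ℝ) := by simp [ncard_eq_toFinset_card _ hBw]
      _ ≤ w.support.ncard := by exact_mod_cast ncard_le_ncard inter_subset_right hw
  · rw [VectorMeasure.not_measurable _ hB, norm_zero]
    positivity

variable [NormedSpace ℝ E]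

/-- The value at `B` of the vector measure `μ` is the `ρ`-integral of the values at `B` of the
family `σ`, with integrability included to exclude the junk value of the integral. -/
def IsAverageAt [MeasurableSpace Ω] (ρ : Measure X) (σ : X → VectorMeasure Ω E)
    (μ : VectorMeasure Ω E) (B : Set Ω) : Prop :=
  Integrable (fun x => σ x B) ρ ∧ ∫ x, σ x B ∂ρ = μ B

section

variable [MeasurableSpace Ω] {ρ : Measure X} {σ : X → VectorMeasure Ω E} {μ : VectorMeasure Ω E}

theorem IsAverageAt.compl {B : Set Ω} (hB : MeasurableSet B) (h : IsAverageAt ρ σ μ B)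
    (huniv : IsAverageAt ρ σ μ univ) : IsAverageAt ρ σ μ Bᶜ := by
  simp only [IsAverageAt, VectorMeasure.of_compl hB]
  exact ⟨huniv.1.sub h.1, by rw [integral_sub huniv.1 h.1, huniv.2, h.2]⟩

theorem IsAverageAt.iUnion {g : X → ℝ} (hg : Integrable g ρ)
    (hσ : ∀ᵐ x ∂ρ, ∀ B, ‖σ x B‖ ≤ g x) {f : ℕ → Set Ω} (hf : ∀ n, MeasurableSet (f n))
    (hdisj : Pairwise (Function.onFun Disjoint f)) (h : ∀ n, IsAverageAt ρ σ μ (f n)) :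
    IsAverageAt ρ σ μ (⋃ n, f n) := by
  have hlim : ∀ ν : VectorMeasure Ω E,
      Tendsto (fun n => ∑ i ∈ Finset.range n, ν (f i)) atTop (𝓝 (ν (⋃ n, f n))) := fun ν =>
    (VectorMeasure.hasSum_of_disjoint_iUnion hf hdisj).tendsto_sum_nat
  have hsum_int : ∀ n, Integrable (fun x => ∑ i ∈ Finset.range n, σ x (f i)) ρ := fun n =>
    integrable_finsetSum _ fun i _ => (h i).1
  have hsum_le : ∀ n, ∀ᵐ x ∂ρ, ‖∑ i ∈ Finset.range n, σ x (f i)‖ ≤ g x := fun n => by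
    filter_upwards [hσ] with x hx
    rw [← VectorMeasure.of_biUnion_finset (fun i _ j _ hij => hdisj hij) fun i _ => hf i]
    exact hx _
  have hlim_ae : ∀ᵐ x ∂ρ, Tendsto (fun n => ∑ i ∈ Finset.range n, σ x (f i)) atTop
      (𝓝 (σ x (⋃ n, f n))) := .of_forall fun x => hlim (σ x)
  refine ⟨hg.mono' (aestronglyMeasurable_of_tendsto_ae _ (fun n => (hsum_int n).1) hlim_ae)
    (hσ.mono fun x hx => hx _), ?_⟩
  refine tendsto_nhds_unique (tendsto_integral_of_dominated_convergence g
    (fun n => (hsum_int n).1) hg hsum_le hlim_ae) ((hlim μ).congr fun n => ?_)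
  rw [integral_finsetSum _ fun i _ => (h i).1]
  exact Finset.sum_congr rfl fun i _ => (h i).2.symm

end

theorem IsAverageAt.of_generateFrom [mΩ : MeasurableSpace Ω] {ρ : Measure X}
    {σ : X → VectorMeasure Ω E} {μ : VectorMeasure Ω E} {g : X → ℝ} (hg : Integrable g ρ)
    (hσ : ∀ᵐ x ∂ρ, ∀ B, ‖σ x B‖ ≤ g x) {C : Set (Set Ω)}
    (hgen : mΩ = MeasurableSpace.generateFrom C) (hC : IsPiSystem C)
    (huniv : IsAverageAt ρ σ μ univ) (h : ∀ B ∈ C, IsAverageAt ρ σ μ B) {B : Set Ω}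
    (hB : MeasurableSet B) : IsAverageAt ρ σ μ B := by
  induction B, hB using MeasurableSpace.induction_on_inter hgen hC with
  | empty => simp [IsAverageAt]
  | basic B hB => exact h B hB
  | compl B hB ih => exact ih.compl hB huniv
  | iUnion f hdisj hf ih => exact .iUnion hg hσ hf hdisj ih

theorem signedIntegral_indicator_comp [MeasurableSpace Ω] (μ : SignedMeasure Ω) {β : Type*}
    {S : Set Ω} {f : Ω → β} {A : Set β} (hS : MeasurableSet S) (hSA : MeasurableSet (S ∩ f ⁻¹' A)) :
    signedIntegral μ S (fun s => A.indicator (fun _ => (1 : ℝ)) (f s)) = μ (S ∩ f ⁻¹' A) := by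
  have hint : ∀ ν : Measure Ω, ∫ s in S, A.indicator (fun _ => (1 : ℝ)) (f s) ∂ν =
      ν.real (S ∩ f ⁻¹' A) := fun ν => by
    change ∫ s in S, (f ⁻¹' A).indicator (fun _ => (1 : ℝ)) s ∂ν = _
    rw [← integral_indicator hS, indicator_indicator, integral_indicator hSA, setIntegral_const,
      smul_eq_mul, mul_one]
  rw [signedIntegral, hint, hint, ← Measure.toSignedMeasure_sub_apply hSA]
  exact congrArg (· (S ∩ f ⁻¹' A)) μ.toSignedMeasure_toJordanDecomposition

theorem measurableSet_inter_preimage_of_locallyBoundedVariationOn {f : ℝ → ℝ} {s A : Set ℝ}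
    (hf : LocallyBoundedVariationOn f s) (hs : MeasurableSet s) (hA : MeasurableSet A) :
    MeasurableSet (s ∩ f ⁻¹' A) := by
  obtain ⟨p, q, hp, hq, rfl⟩ := hf.exists_monotoneOn_sub_monotoneOn
  have hp_meas : Measurable fun u : s => p u := Monotone.measurable fun u v huv => hp u.2 v.2 huv
  have hq_meas : Measurable fun u : s => q u := Monotone.measurable fun u v huv => hq u.2 v.2 huv
  rw [← Subtype.image_preimage_coe]
  exact hs.subtype_image ((hp_meas.sub hq_meas) hA)

end VectorMeasure

theorem integrable_tsum_of_summable_integral_norm {X E ι : Type*} [MeasurableSpace X]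
    {ρ : Measure X} [NormedAddCommGroup E] [CompleteSpace E] [Countable ι] {F : ι → X → E}
    (hF : ∀ i, Integrable (F i) ρ) (hsum : Summable fun i => ∫ x, ‖F i x‖ ∂ρ) :
    Integrable (fun x => ∑' i, F i x) ρ := by
  have hlint : ∫⁻ x, ∑' i, ‖F i x‖ₑ ∂ρ ≠ ∞ := by
    rw [lintegral_tsum fun i => (hF i).1.enorm]
    simp only [← ofReal_integral_norm_eq_lintegral_enorm (hF _)]
    exact hsum.tsum_ofReal_ne_top
  have hmeas : AEStronglyMeasurable (fun x => ∑' i, F i x) ρ := by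
    refine aestronglyMeasurable_of_tendsto_ae (atTop : Filter (Finset ι))
      (f := fun s x => ∑ i ∈ s, F i x)
      (fun s => Finset.aestronglyMeasurable_fun_sum s fun i _ => (hF i).1) ?_
    filter_upwards [ae_lt_top' (AEMeasurable.tsum fun i => (hF i).1.enorm) hlint] with x hx
    have hsummable : Summable fun i => F i x :=
      (ENNReal.tsum_coe_ne_top_iff_summable.1 hx.ne).of_nnnorm
    exact hsummable.hasSum
  exact ⟨hmeas, (lintegral_mono fun _ => enorm_tsum_le_tsum_enorm).trans_lt hlint.lt_top⟩

theorem hasSum_Ioc_sub {α E : Type*} [LinearOrder α] [AddCommGroup E] [TopologicalSpace E]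
    [IsTopologicalAddGroup E] {f : α → E} {a b c : α} {p q : E}
    (hp : HasSum (fun s : Ioc a b => f s) p) (hq : HasSum (fun s : Ioc a c => f s) q)
    (hab : a ≤ b) (hbc : b ≤ c) : HasSum (fun s : Ioc b c => f s) (q - p) := by
  have hdiff : Ioc a c \ Ioc a b = Ioc b c := by
    ext s
    simp only [Set.mem_sdiff, mem_Ioc]
    grind
  rw [← Function.comp_def, hasSum_subtype_iff_indicator] at hp hq ⊢
  rw [← hdiff, indicator_sdiff (Ioc_subset_Ioc_right hbc)]
  exact hq.sub hp

section LevelCrossing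

/-- The net number of upward crossings of the level `x` by a jump from `p` to `q`, where a point
counts as above the level when it is strictly greater than `x`. -/
def levelCrossing (p q x : ℝ) : ℝ := (if x < q then 1 else 0) - if x < p then 1 else 0

theorem levelCrossing_eq_zero_iff {p q x : ℝ} : levelCrossing p q x = 0 ↔ (x < p ↔ x < q) := by
  unfold levelCrossing
  split_ifs <;> simp [*]

theorem levelCrossing_eq_indicator_sub_indicator (p q x : ℝ) :
    levelCrossing p q x = (Ico p q).indicator 1 x - (Ico q p).indicator 1 x := by
  simp only [levelCrossing, indicator_apply, mem_Ico, Pi.one_apply]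
  grind

theorem norm_levelCrossing_eq_indicator (p q x : ℝ) :
    ‖levelCrossing p q x‖ = (Ico (min p q) (max p q)).indicator 1 x := by
  simp only [levelCrossing, indicator_apply, mem_Ico, Pi.one_apply, Real.norm_eq_abs]
  grind

theorem integrable_indicator_Ico (p q : ℝ) : Integrable ((Ico p q).indicator (1 : ℝ → ℝ)) :=
  (integrable_indicator_iff measurableSet_Ico).2 (integrableOn_const measure_Ico_lt_top.ne)

theorem integral_indicator_Ico (p q : ℝ) :
    ∫ x, (Ico p q).indicator (1 : ℝ → ℝ) x = max (q - p) 0 := by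
  rw [integral_indicator_one measurableSet_Ico, Real.volume_real_Ico]

theorem integrable_levelCrossing (p q : ℝ) : Integrable (levelCrossing p q) :=
  ((integrable_indicator_Ico p q).sub (integrable_indicator_Ico q p)).congr
    (.of_forall fun x => (levelCrossing_eq_indicator_sub_indicator p q x).symm)

theorem integral_levelCrossing (p q : ℝ) : ∫ x, levelCrossing p q x = q - p := by
  simp only [levelCrossing_eq_indicator_sub_indicator]
  rw [integral_sub (integrable_indicator_Ico p q) (integrable_indicator_Ico q p),
    integral_indicator_Ico, integral_indicator_Ico]
  grind

theorem integral_norm_levelCrossing (p q : ℝ) : ∫ x, ‖levelCrossing p q x‖ = |q - p| := by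
  simp only [norm_levelCrossing_eq_indicator, integral_indicator_Ico]
  grind

theorem volume_levelCrossing_ne_zero (p q : ℝ) :
    volume {x | levelCrossing p q x ≠ 0} = ENNReal.ofReal |q - p| := by
  have hset : {x | levelCrossing p q x ≠ 0} = Ico (min p q) (max p q) := by
    ext x
    rw [mem_ofPred_eq, ← norm_ne_zero_iff, norm_levelCrossing_eq_indicator]
    rw [indicator_apply_ne_zero, Function.support_one, inter_univ]
  rw [hset, Real.volume_Ico, max_sub_min_eq_abs]

variable {ι : Type*} {p q : ι → ℝ}

theorem support_levelCrossing_subset (p q : ι → ℝ) (x : ℝ) :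
    (Function.support fun i => levelCrossing (p i) (q i) x) ⊆
      Function.support fun i => |q i - p i| := by
  intro i hi h0
  rw [abs_eq_zero, sub_eq_zero] at h0
  exact hi (by simp [levelCrossing, h0])

theorem ae_finite_levelCrossing_ne_zero (h : Summable fun i => |q i - p i|) :
    ∀ᵐ x, {i | levelCrossing (p i) (q i) x ≠ 0}.Finite := by
  let J := Function.support fun i => |q i - p i|
  have : Countable J := h.countable_support.to_subtype
  have hvol : ∑' i : J, volume {x | levelCrossing (p i) (q i) x ≠ 0} ≠ ∞ := by
    simp only [volume_levelCrossing_ne_zero]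
    exact (h.comp_injective Subtype.val_injective).tsum_ofReal_ne_top
  filter_upwards [ae_finite_setOfPred_mem hvol] with x hx
  refine (hx.image Subtype.val).subset fun i hi => ?_
  exact ⟨⟨i, support_levelCrossing_subset p q x hi⟩, hi, rfl⟩

theorem integrable_and_hasSum_integral_tsum_levelCrossing (h : Summable fun i => |q i - p i|) :
    Integrable (fun x => ∑' i, levelCrossing (p i) (q i) x) ∧
      HasSum (fun i => q i - p i) (∫ x, ∑' i, levelCrossing (p i) (q i) x) := by
  let J := Function.support fun i => |q i - p i|
  have : Countable J := h.countable_support.to_subtype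
  have hJ : ∀ x, ∑' i : J, levelCrossing (p i) (q i) x = ∑' i, levelCrossing (p i) (q i) x :=
    fun x => tsum_subtype_eq_of_support_subset (support_levelCrossing_subset p q x)
  have hint : ∀ i : J, Integrable (levelCrossing (p i) (q i)) := fun i =>
    integrable_levelCrossing _ _
  have hsum : Summable fun i : J => ∫ x, ‖levelCrossing (p i) (q i) x‖ := by
    simp only [integral_norm_levelCrossing]
    exact h.comp_injective Subtype.val_injective
  have hJ_supp : (Function.support fun i => q i - p i) ⊆ J := fun i hi => abs_ne_zero.2 hi
  rw [← hasSum_subtype_iff_of_support_subset hJ_supp]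
  simp only [← hJ]
  refine ⟨integrable_tsum_of_summable_integral_norm hint hsum, ?_⟩
  simpa only [integral_levelCrossing, Function.comp_def] using
    hasSum_integral_of_summable_integral_norm hint hsum

end LevelCrossing

section Cadlag

variable {V Vm : ℝ → ℝ} {t x r : ℝ}

/-- `V` is right-continuous on `[0, ∞)`, with left limits given by `Vm` on `(0, ∞)`. -/
structure IsCadlag (V Vm : ℝ → ℝ) : Prop where
  continuousWithinAt_Ici : ∀ r ∈ Ici (0 : ℝ), ContinuousWithinAt V (Ici r) r
  tendsto_nhdsLT : ∀ r ∈ Ioi (0 : ℝ), Tendsto V (𝓝[<] r) (𝓝 (Vm r))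

theorem IsCadlag.eventually_nhdsGT_lt_iff (hV : IsCadlag V Vm) (hr : 0 ≤ r) (hrx : V r ≠ x) :
    ∀ᶠ u in 𝓝[>] r, (x < V u ↔ x < V r) :=
  eventually_lt_iff_of_tendsto
    ((hV.continuousWithinAt_Ici r hr).mono_left (nhdsWithin_mono r Ioi_subset_Ici_self)) hrx

theorem IsCadlag.eventually_nhdsLT_lt_iff (hV : IsCadlag V Vm) (hr : 0 < r) (hrx : Vm r ≠ x) :
    ∀ᶠ u in 𝓝[<] r, (x < V u ↔ x < Vm r) :=
  eventually_lt_iff_of_tendsto (hV.tendsto_nhdsLT r hr) hrx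

theorem IsCadlag.lt_iff_lt_of_forall_levelCrossing_eq_zero (hV : IsCadlag V Vm) {a b : ℝ}
    (ha : 0 ≤ a) (hab : a ≤ b) (hlevel : ∀ r ∈ Icc a b, V r ≠ x) (hleft : ∀ r ∈ Ioc a b, Vm r ≠ x)
    (hcross : ∀ r ∈ Ioc a b, levelCrossing (Vm r) (V r) x = 0) : x < V a ↔ x < V b := by
  rw [← eq_iff_iff]
  refine eq_of_eventuallyEq_nhdsLT_nhdsGT (f := fun r => x < V r) hab ?_ ?_
  · intro r hr
    filter_upwards [hV.eventually_nhdsLT_lt_iff (ha.trans_lt hr.1) (hleft r hr)] with u hu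
    exact propext (hu.trans (levelCrossing_eq_zero_iff.1 (hcross r hr)))
  · intro r hr
    filter_upwards [hV.eventually_nhdsGT_lt_iff (ha.trans hr.1) (hlevel r (Ico_subset_Icc_self hr))]
      with u hu
    exact propext hu

theorem increasesThrough_iff_of_pos (hr : 0 < r) :
    IncreasesThrough V x r ↔ V r = x ∧ ContinuousAt V r ∧
      (∀ᶠ u in 𝓝[<] r, V u < x) ∧ ∀ᶠ u in 𝓝[>] r, x < V u := by
  have hsides : (∃ ε > 0, ∀ s ∈ Ici (0 : ℝ), |s - r| < ε →
        ((s < r → V s < V r) ∧ (r < s → V r < V s))) ↔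
      (∀ᶠ u in 𝓝[<] r, V u < V r) ∧ ∀ᶠ u in 𝓝[>] r, V r < V u := by
    rw [eventually_nhdsWithin_iff, eventually_nhdsWithin_iff, ← eventually_and,
      ← nhdsWithin_eq_nhds.2 (Ici_mem_nhds hr), Metric.nhdsWithin_basis_ball.eventually_iff]
    simp only [mem_inter_iff, Metric.mem_ball, Real.dist_eq, and_imp, mem_Iio, mem_Ioi]
    exact exists_congr fun ε => and_congr_right fun _ => forall_congr' fun s => imp.swap
  unfold IncreasesThrough
  rw [hsides, continuousWithinAt_iff_continuousAt (Ici_mem_nhds hr)]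
  constructor
  · rintro ⟨-, rfl, h⟩
    exact ⟨rfl, h⟩
  · rintro ⟨rfl, h⟩
    exact ⟨hr, rfl, h⟩

theorem decreasesThrough_iff_of_pos (hr : 0 < r) :
    DecreasesThrough V x r ↔ V r = x ∧ ContinuousAt V r ∧
      (∀ᶠ u in 𝓝[<] r, x < V u) ∧ ∀ᶠ u in 𝓝[>] r, V u < x := by
  rw [DecreasesThrough, increasesThrough_iff_of_pos hr]
  simp only [neg_inj, neg_lt_neg_iff]
  have : ContinuousAt (fun s => -V s) r ↔ ContinuousAt V r := continuousAt_neg_iff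
  rw [this]

/-- A level `x` which `V` attains only finitely often on `(0, t]`, never as a local extremum, at a
jump or at time `t`, and which finitely many jumps of `V` straddle. -/
structure IsRegularLevel (V Vm : ℝ → ℝ) (t x : ℝ) : Prop where
  finite_level : (Ioc 0 t ∩ V ⁻¹' {x}).Finite
  finite_crossing : {s ∈ Ioc 0 t | levelCrossing (Vm s) (V s) x ≠ 0}.Finite
  leftLimit_eq_iff : ∀ s ∈ Ioc 0 t, (Vm s = x ↔ V s = x)
  not_isLocalExtr : ∀ s, V s = x → ¬IsLocalExtr V s
  endpoint_ne : V t ≠ x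

theorem ae_isRegularLevel (hbv : BoundedVariationOn V (Icc 0 t)) (ht : 0 ≤ t)
    (hjump : Summable fun s : Ioc (0 : ℝ) t => |V s - Vm s|) :
    ∀ᵐ x, IsRegularLevel V Vm t x := by
  have hlevel : ∀ᵐ x, (Ioc 0 t ∩ V ⁻¹' {x}).Finite :=
    (exists_integrable_ncard_le_of_boundedVariationOn ht hbv).elim fun _ hg =>
      hg.2.mono fun _ => And.left
  let J : Set ℝ := Subtype.val '' Function.support fun s : Ioc (0 : ℝ) t => |V s - Vm s|
  have hJ : J.Countable := hjump.countable_support.image _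
  have hextr : ∀ᵐ x, x ∉ V '' {s | IsLocalExtr V s} :=
    (countable_image_isLocalExtr V).ae_notMem volume
  filter_upwards [hlevel, ae_finite_levelCrossing_ne_zero hjump, (hJ.image V).ae_notMem volume,
    (hJ.image Vm).ae_notMem volume, hextr, (countable_singleton (V t)).ae_notMem volume]
    with x hfin hcross hxV hxVm hx_extr hxt
  refine ⟨hfin, (hcross.image Subtype.val).subset fun s hs => ⟨⟨s, hs.1⟩, hs.2, rfl⟩, ?_,
    fun s hs hs_extr => hx_extr ⟨s, hs_extr, hs⟩, Ne.symm hxt⟩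
  intro s hs
  by_cases hsJ : s ∈ J
  · exact iff_of_false (fun h => hxVm ⟨s, hsJ, h⟩) fun h => hxV ⟨s, hsJ, h⟩
  · have hVs : V s = Vm s := by
      by_contra hne
      exact hsJ ⟨⟨s, hs⟩, abs_ne_zero.2 (sub_ne_zero.2 hne), rfl⟩
    rw [hVs]

/-- The times in `(0, t)` at which `V` is off the level `x` and does not jump across it; on an
interval of such times `V` stays on one side of `x`. -/
def quietTimes (V Vm : ℝ → ℝ) (t x : ℝ) : Set ℝ :=
  {u ∈ Ioo 0 t | V u ≠ x ∧ levelCrossing (Vm u) (V u) x = 0}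

namespace IsRegularLevel

theorem forall_lt_or_forall_gt (h : IsRegularLevel V Vm t x) (hV : IsCadlag V Vm) {I : Set ℝ}
    (hI : I.OrdConnected) (hIq : I ⊆ quietTimes V Vm t x) :
    (∀ u ∈ I, x < V u) ∨ ∀ u ∈ I, V u < x := by
  have hsame : ∀ u ∈ I, ∀ v ∈ I, u ≤ v → (x < V u ↔ x < V v) := fun u hu v hv huv => by
    have hq : Icc u v ⊆ quietTimes V Vm t x := (hI.out hu hv).trans hIq
    refine hV.lt_iff_lt_of_forall_levelCrossing_eq_zero (hIq hu).1.1.le huv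
      (fun r hr => (hq hr).2.1) (fun r hr hrx => ?_) fun r hr => (hq (Ioc_subset_Icc_self hr)).2.2
    have hr' := hq (Ioc_subset_Icc_self hr)
    exact hr'.2.1 ((h.leftLimit_eq_iff r (Ioo_subset_Ioc_self hr'.1)).1 hrx)
  by_contra! ⟨⟨u, hu, hux⟩, v, hv, hvx⟩
  have hux : V u < x := hux.lt_of_ne (hIq hu).2.1
  have hvx : x < V v := hvx.lt_of_ne (hIq hv).2.1.symm
  rcases le_total u v with huv | hvu
  · exact hux.not_gt ((hsame u hu v hv huv).2 hvx)
  · exact hux.not_gt ((hsame v hv u hu hvu).1 hvx)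

theorem quietTimes_mem_nhdsWithin (h : IsRegularLevel V Vm t x) {S : Set ℝ} (hrS : r ∉ S)
    (hS : Ioo 0 t ∈ 𝓝[S] r) : quietTimes V Vm t x ∈ 𝓝[S] r := by
  have hfin := (h.finite_level.union h.finite_crossing).sdiff (t := {r})
  filter_upwards [hS, nhdsWithin_le_nhds (hfin.isClosed.compl_mem_nhds fun hr => hr.2 rfl),
    self_mem_nhdsWithin] with u hu hnotMem huS
  have hu' := Ioo_subset_Ioc_self hu
  have hur : u ≠ r := fun h => hrS (h ▸ huS)
  exact ⟨hu, fun hux => hnotMem ⟨.inl ⟨hu', hux⟩, hur⟩,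
    by_contra fun hc => hnotMem ⟨.inr ⟨hu', hc⟩, hur⟩⟩

theorem eventually_nhdsLT_lt_or_gt (h : IsRegularLevel V Vm t x) (hV : IsCadlag V Vm)
    (hr : r ∈ Ioc 0 t) : (∀ᶠ u in 𝓝[<] r, x < V u) ∨ ∀ᶠ u in 𝓝[<] r, V u < x := by
  have hquiet := h.quietTimes_mem_nhdsWithin (self_notMem_Iio (a := r))
    (mem_of_superset (Ioo_mem_nhdsLT hr.1) (Ioo_subset_Ioo_right hr.2))
  obtain ⟨l, hl, hlr⟩ := mem_nhdsLT_iff_exists_Ioo_subset.1 hquiet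
  exact (h.forall_lt_or_forall_gt hV ordConnected_Ioo hlr).imp
    (mem_of_superset (Ioo_mem_nhdsLT hl)) (mem_of_superset (Ioo_mem_nhdsLT hl))

theorem eventually_nhdsGT_lt_or_gt (h : IsRegularLevel V Vm t x) (hV : IsCadlag V Vm)
    (hr : r ∈ Ico 0 t) : (∀ᶠ u in 𝓝[>] r, x < V u) ∨ ∀ᶠ u in 𝓝[>] r, V u < x := by
  have hquiet := h.quietTimes_mem_nhdsWithin (self_notMem_Ioi (a := r))
    (mem_of_superset (Ioo_mem_nhdsGT hr.2) (Ioo_subset_Ioo_left hr.1))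
  obtain ⟨l, hl, hrl⟩ := mem_nhdsGT_iff_exists_Ioo_subset.1 hquiet
  exact (h.forall_lt_or_forall_gt hV ordConnected_Ioo hrl).imp
    (mem_of_superset (Ioo_mem_nhdsGT hl)) (mem_of_superset (Ioo_mem_nhdsGT hl))

theorem mem_Ioo_of_eq (h : IsRegularLevel V Vm t x) (hr : r ∈ Ioc 0 t) (hrx : V r = x) :
    r ∈ Ioo 0 t :=
  ⟨hr.1, hr.2.lt_of_ne fun hrt => h.endpoint_ne (hrt ▸ hrx)⟩

theorem continuousAt_of_eq (h : IsRegularLevel V Vm t x) (hV : IsCadlag V Vm) (hr : r ∈ Ioc 0 t)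
    (hrx : V r = x) : ContinuousAt V r := by
  refine continuousAt_iff_continuous_left'_right'.2
    ⟨?_, (hV.continuousWithinAt_Ici r hr.1.le).mono Ioi_subset_Ici_self⟩
  have hVm := hV.tendsto_nhdsLT r hr.1
  rwa [(h.leftLimit_eq_iff r hr).2 hrx, ← hrx] at hVm

theorem increasesThrough_or_decreasesThrough (h : IsRegularLevel V Vm t x) (hV : IsCadlag V Vm)
    (hr : r ∈ Ioc 0 t) (hrx : V r = x) : IncreasesThrough V x r ∨ DecreasesThrough V x r := by
  have hcont := h.continuousAt_of_eq hV hr hrx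
  rw [increasesThrough_iff_of_pos hr.1, decreasesThrough_iff_of_pos hr.1]
  have hnhds : ∀ {P : ℝ → Prop}, P r → (∀ᶠ u in 𝓝[<] r, P u) → (∀ᶠ u in 𝓝[>] r, P u) →
      ∀ᶠ u in 𝓝 r, P u := fun hPr hleft hright => by
    rw [← nhdsNE_sup_pure, ← nhdsLT_sup_nhdsGT, eventually_sup, eventually_sup]
    exact ⟨⟨hleft, hright⟩, hPr⟩
  rcases h.eventually_nhdsLT_lt_or_gt hV hr with hleft | hleft <;>
    rcases h.eventually_nhdsGT_lt_or_gt hV ⟨hr.1.le, (h.mem_Ioo_of_eq hr hrx).2⟩ with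
      hright | hright
  · refine (h.not_isLocalExtr r hrx (.inl ?_)).elim
    exact hnhds le_rfl (hleft.mono fun u hu => (hrx.trans_lt hu).le)
      (hright.mono fun u hu => (hrx.trans_lt hu).le)
  · exact .inr ⟨hrx, hcont, hleft, hright⟩
  · exact .inl ⟨hrx, hcont, hleft, hright⟩
  · refine (h.not_isLocalExtr r hrx (.inr ?_)).elim
    exact hnhds le_rfl (hleft.mono fun u hu => (hu.trans_eq hrx.symm).le)
      (hright.mono fun u hu => (hu.trans_eq hrx.symm).le)

end IsRegularLevel

end Cadlag

section Passages

variable {V Vm : ℝ → ℝ} {t x r : ℝ}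

open scoped Classical in
/-- Equal to `1` if `V` lies above the level `x` immediately after time `r`, and to `0` otherwise.
Unlike the indicator of `x < V r`, it is right-continuous where `V` increases through `x`. -/
def aboveAfter (V : ℝ → ℝ) (x r : ℝ) : ℝ := if ∀ᶠ u in 𝓝[>] r, x < V u then 1 else 0

open scoped Classical in
/-- Equal to `1` if `V` lies above the level `x` immediately before time `r`, and to `0`
otherwise. -/
def aboveBefore (V : ℝ → ℝ) (x r : ℝ) : ℝ := if ∀ᶠ u in 𝓝[<] r, x < V u then 1 else 0

open scoped Classical in
/-- The contribution of time `s` to the signed local time of `V` at the level `x`. -/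
def passageSign (V : ℝ → ℝ) (x s : ℝ) : ℝ :=
  (if IncreasesThrough V x s then 1 else 0) - if DecreasesThrough V x s then 1 else 0

theorem passageSign_eq_zero_of_ne (h : V r ≠ x) : passageSign V x r = 0 := by
  rw [passageSign, if_neg fun hI => h hI.2.1, if_neg fun hD => h (neg_injective hD.2.1), sub_zero]

theorem support_passageSign_subset (V : ℝ → ℝ) (x : ℝ) :
    (passageSign V x).support ⊆ V ⁻¹' {x} := fun _ hr =>
  not_imp_comm.1 passageSign_eq_zero_of_ne hr

theorem norm_passageSign_le_one (V : ℝ → ℝ) (x s : ℝ) : ‖passageSign V x s‖ ≤ 1 := by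
  unfold passageSign
  split_ifs <;> norm_num

theorem IsCadlag.aboveAfter_eq (hV : IsCadlag V Vm) (hr : 0 ≤ r) (hrx : V r ≠ x) :
    aboveAfter V x r = if x < V r then 1 else 0 := by
  have h : (∀ᶠ u in 𝓝[>] r, x < V u) ↔ x < V r := by
    rw [eventually_congr (hV.eventually_nhdsGT_lt_iff hr hrx), eventually_const]
  simp only [aboveAfter, h]

theorem IsCadlag.aboveBefore_eq (hV : IsCadlag V Vm) (hr : 0 < r) (hrx : Vm r ≠ x) :
    aboveBefore V x r = if x < Vm r then 1 else 0 := by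
  have h : (∀ᶠ u in 𝓝[<] r, x < V u) ↔ x < Vm r := by
    rw [eventually_congr (hV.eventually_nhdsLT_lt_iff hr hrx), eventually_const]
  simp only [aboveBefore, h]

theorem IncreasesThrough.aboveAfter_sub_aboveBefore (h : IncreasesThrough V x r) :
    aboveAfter V x r - aboveBefore V x r = 1 := by
  obtain ⟨-, -, hbefore, hafter⟩ := (increasesThrough_iff_of_pos h.1).1 h
  have hnot : ¬∀ᶠ u in 𝓝[<] r, x < V u := fun hu =>
    (hu.and hbefore).exists.elim fun _ hv => hv.1.not_gt hv.2
  rw [aboveAfter, aboveBefore, if_pos hafter, if_neg hnot, sub_zero]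

theorem DecreasesThrough.aboveAfter_sub_aboveBefore (h : DecreasesThrough V x r) :
    aboveAfter V x r - aboveBefore V x r = -1 := by
  obtain ⟨-, -, hbefore, hafter⟩ := (decreasesThrough_iff_of_pos h.1).1 h
  have hnot : ¬∀ᶠ u in 𝓝[>] r, x < V u := fun hu =>
    (hu.and hafter).exists.elim fun _ hv => hv.1.not_gt hv.2
  rw [aboveAfter, aboveBefore, if_neg hnot, if_pos hbefore, zero_sub]

theorem IncreasesThrough.not_decreasesThrough (hI : IncreasesThrough V x r) :
    ¬DecreasesThrough V x r := fun hD => by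
  have := hI.aboveAfter_sub_aboveBefore.symm.trans hD.aboveAfter_sub_aboveBefore
  norm_num at this

namespace IsRegularLevel

theorem aboveAfter_sub_aboveBefore (h : IsRegularLevel V Vm t x) (hV : IsCadlag V Vm)
    (hr : r ∈ Ioc 0 t) :
    aboveAfter V x r - aboveBefore V x r = passageSign V x r + levelCrossing (Vm r) (V r) x := by
  by_cases hrx : V r = x
  · have hcross : levelCrossing (Vm r) (V r) x = 0 :=
      levelCrossing_eq_zero_iff.2 (by rw [(h.leftLimit_eq_iff r hr).2 hrx, hrx])
    rw [hcross, add_zero, passageSign]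
    rcases h.increasesThrough_or_decreasesThrough hV hr hrx with hI | hD
    · rw [hI.aboveAfter_sub_aboveBefore, if_pos hI, if_neg hI.not_decreasesThrough, sub_zero]
    · rw [hD.aboveAfter_sub_aboveBefore, if_neg fun hI => hI.not_decreasesThrough hD, if_pos hD,
        zero_sub]
  · rw [passageSign_eq_zero_of_ne hrx, zero_add, levelCrossing, hV.aboveAfter_eq hr.1.le hrx,
      hV.aboveBefore_eq hr.1 (mt (h.leftLimit_eq_iff r hr).1 hrx)]

theorem eventually_aboveAfter_eq_aboveBefore (h : IsRegularLevel V Vm t x) (hV : IsCadlag V Vm)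
    (hr : r ∈ Ioc 0 t) : ∀ᶠ u in 𝓝[<] r, aboveAfter V x u = aboveBefore V x r := by
  have hside := (h.eventually_nhdsLT_lt_or_gt hV hr).imp_right
    fun hlt => hlt.mono fun _ => not_lt_of_gt
  filter_upwards [eventually_eventually_nhdsGT_iff isOpen_Iio hside] with u hu
  classical exact if_congr hu rfl rfl

theorem eventually_aboveAfter_eq_aboveAfter (h : IsRegularLevel V Vm t x) (hV : IsCadlag V Vm)
    (hr : r ∈ Ico 0 t) : ∀ᶠ u in 𝓝[>] r, aboveAfter V x u = aboveAfter V x r := by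
  have hside := (h.eventually_nhdsGT_lt_or_gt hV hr).imp_right
    fun hlt => hlt.mono fun _ => not_lt_of_gt
  filter_upwards [eventually_eventually_nhdsGT_iff isOpen_Ioi hside] with u hu
  classical exact if_congr hu rfl rfl

theorem finite_passageSign_support (h : IsRegularLevel V Vm t x) :
    (Ioc 0 t ∩ (passageSign V x).support).Finite :=
  h.finite_level.subset (inter_subset_inter_right _ (support_passageSign_subset V x))

theorem levelCrossing_eq_finsum (h : IsRegularLevel V Vm t x) (hV : IsCadlag V Vm) {a b : ℝ}
    (ha : 0 ≤ a) (hab : a ≤ b) (hbt : b ≤ t) (hax : V a ≠ x) (hbx : V b ≠ x) :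
    levelCrossing (V a) (V b) x =
      ∑ᶠ s ∈ Ioc a b, passageSign V x s + ∑ᶠ s ∈ Ioc a b, levelCrossing (Vm s) (V s) x := by
  have hsub : Ioc a b ⊆ Ioc 0 t := Ioc_subset_Ioc ha hbt
  have hpass : (Ioc a b ∩ (passageSign V x).support).Finite :=
    h.finite_passageSign_support.subset (inter_subset_inter_left _ hsub)
  have hcross : (Ioc a b ∩ Function.support fun s => levelCrossing (Vm s) (V s) x).Finite :=
    h.finite_crossing.subset fun s hs => ⟨hsub hs.1, hs.2⟩
  have hstep : ∀ s ∈ Ioc a b, aboveAfter V x s - aboveBefore V x s =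
      passageSign V x s + levelCrossing (Vm s) (V s) x := fun s hs =>
    h.aboveAfter_sub_aboveBefore hV (hsub hs)
  have hfin :
      (Ioc a b ∩ Function.support fun s => aboveAfter V x s - aboveBefore V x s).Finite := by
    have hunion := hpass.union hcross
    rw [← inter_union_distrib_left] at hunion
    exact hunion.subset fun s hs => ⟨hs.1, Function.support_add _ _ fun h0 =>
      hs.2 ((hstep s hs.1).trans h0)⟩
  calc levelCrossing (V a) (V b) x = aboveAfter V x b - aboveAfter V x a := by
        rw [hV.aboveAfter_eq (ha.trans hab) hbx, hV.aboveAfter_eq ha hax, levelCrossing]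
    _ = ∑ᶠ s ∈ Ioc a b, (aboveAfter V x s - aboveBefore V x s) :=
        sub_eq_finsum_sub_leftValue hab hfin
          (fun r hr => h.eventually_aboveAfter_eq_aboveBefore hV (hsub hr))
          fun r hr => h.eventually_aboveAfter_eq_aboveAfter hV ⟨ha.trans hr.1, hr.2.trans_le hbt⟩
    _ = ∑ᶠ s ∈ Ioc a b, (passageSign V x s + levelCrossing (Vm s) (V s) x) :=
        finsum_mem_congr rfl hstep
    _ = _ := finsum_mem_add_distrib' hpass hcross

end IsRegularLevel

/-- The signed counting measure of the passages of `V` through the level `x` up to time `t`; like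
`signedLocalTime`, it is meaningful when there are finitely many of them. -/
def passageMeasure (V : ℝ → ℝ) (t x : ℝ) : SignedMeasure ℝ :=
  atomicMeasure ((Ioc 0 t).indicator (passageSign V x))

namespace IsRegularLevel

theorem passageMeasure_apply (h : IsRegularLevel V Vm t x) {B : Set ℝ} (hB : MeasurableSet B) :
    passageMeasure V t x B = ∑ᶠ s ∈ B ∩ Ioc 0 t, passageSign V x s := by
  have hfin : ((Ioc 0 t).indicator (passageSign V x)).support.Finite := by
    rw [support_indicator]
    exact h.finite_passageSign_support
  rw [passageMeasure, atomicMeasure_apply hfin hB, finsum_mem_def, indicator_indicator,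
    ← finsum_mem_def]

theorem norm_passageMeasure_le (h : IsRegularLevel V Vm t x) (B : Set ℝ) :
    ‖passageMeasure V t x B‖ ≤ (Ioc 0 t ∩ V ⁻¹' {x}).ncard := by
  have hsupp : ((Ioc 0 t).indicator (passageSign V x)).support ⊆ Ioc 0 t ∩ V ⁻¹' {x} := by
    rw [support_indicator]
    exact inter_subset_inter_right _ (support_passageSign_subset V x)
  have hnorm : ∀ s, ‖(Ioc 0 t).indicator (passageSign V x) s‖ ≤ 1 := fun s =>
    (norm_indicator_le_norm_self _ _).trans (norm_passageSign_le_one V x s)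
  calc ‖passageMeasure V t x B‖ ≤ ((Ioc 0 t).indicator (passageSign V x)).support.ncard :=
        norm_atomicMeasure_le (h.finite_level.subset hsupp) hnorm B
    _ ≤ (Ioc 0 t ∩ V ⁻¹' {x}).ncard := by exact_mod_cast ncard_le_ncard hsupp h.finite_level

theorem finite_incSet (h : IsRegularLevel V Vm t x) : (incSet V x t).Finite :=
  h.finite_level.subset fun _ hs => ⟨hs.1, hs.2.2.1⟩

theorem finite_decSet (h : IsRegularLevel V Vm t x) : (decSet V x t).Finite :=
  h.finite_level.subset fun _ hs => ⟨hs.1, neg_injective hs.2.2.1⟩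

theorem finsum_passageSign (h : IsRegularLevel V Vm t x) :
    ∑ᶠ s ∈ Ioc 0 t, passageSign V x s = signedLocalTime V x t := by
  classical
  have hcard : ∀ {S : Set ℝ}, S.Finite → ∑ᶠ s, S.indicator (1 : ℝ → ℝ) s = S.ncard := by
    intro S hS
    rw [← finsum_mem_def, finsum_mem_eq_finite_toFinset_sum _ hS]
    simp [ncard_eq_toFinset_card _ hS]
  have hsupp : ∀ {S : Set ℝ}, S.Finite → (S.indicator (1 : ℝ → ℝ)).support.Finite := fun hS =>
    hS.subset support_indicator_subset
  have hsplit : (Ioc 0 t).indicator (passageSign V x) =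
      fun s => (incSet V x t).indicator (1 : ℝ → ℝ) s - (decSet V x t).indicator 1 s := by
    ext s
    by_cases hs : s ∈ Ioc 0 t <;>
      simp [indicator_apply, passageSign, incSet, decSet, hs, -mem_Ioc]
  rw [finsum_mem_def, hsplit, finsum_sub_distrib (hsupp h.finite_incSet) (hsupp h.finite_decSet),
    hcard h.finite_incSet, hcard h.finite_decSet, signedLocalTime]
  push_cast
  rfl

theorem passageMeasure_preimage (h : IsRegularLevel V Vm t x) {A : Set ℝ}
    (hA : MeasurableSet (Ioc 0 t ∩ V ⁻¹' A)) :
    passageMeasure V t x (Ioc 0 t ∩ V ⁻¹' A) =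
      A.indicator (fun x => (signedLocalTime V x t : ℝ)) x := by
  rw [h.passageMeasure_apply hA, inter_right_comm, inter_self]
  by_cases hxA : x ∈ A
  · rw [indicator_of_mem hxA, ← h.finsum_passageSign]
    refine finsum_mem_inter_support_eq' _ _ _ fun s hs => ?_
    have hsx : V s = x := support_passageSign_subset V x hs
    rw [mem_inter_iff, mem_preimage, hsx, and_iff_left hxA]
  · rw [indicator_of_notMem hxA]
    refine finsum_mem_eq_zero_of_forall_eq_zero fun s hs => passageSign_eq_zero_of_ne ?_
    rintro rfl
    exact hxA hs.2

end IsRegularLevel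

theorem ae_passageMeasure_Ioc_eq (hV : IsCadlag V Vm) (hreg : ∀ᵐ x, IsRegularLevel V Vm t x)
    {a b : ℝ} (ha : 0 ≤ a) (hab : a ≤ b) (hbt : b ≤ t) :
    ∀ᵐ x, passageMeasure V t x (Ioc a b) =
      levelCrossing (V a) (V b) x - ∑' s : Ioc a b, levelCrossing (Vm s) (V s) x := by
  filter_upwards [hreg, (countable_singleton (V a)).ae_notMem volume,
    (countable_singleton (V b)).ae_notMem volume] with x hx hxa hxb
  have hsub : Ioc a b ⊆ Ioc 0 t := Ioc_subset_Ioc ha hbt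
  have hcross : (Function.support fun s : Ioc a b => levelCrossing (Vm s) (V s) x).Finite :=
    (hx.finite_crossing.preimage Subtype.val_injective.injOn).subset fun s hs => ⟨hsub s.2, hs⟩
  rw [hx.passageMeasure_apply measurableSet_Ioc, inter_eq_left.2 hsub, tsum_eq_finsum hcross,
    finsum_set_coe_eq_finsum_mem (f := fun s => levelCrossing (Vm s) (V s) x),
    hx.levelCrossing_eq_finsum hV ha hab hbt (Ne.symm hxa) (Ne.symm hxb), add_sub_cancel_right]

theorem isAverageAt_passageMeasure_Ioc (hV : IsCadlag V Vm)
    (hreg : ∀ᵐ x, IsRegularLevel V Vm t x) {a b : ℝ} (ha : 0 ≤ a) (hab : a ≤ b) (hbt : b ≤ t)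
    (hjump : Summable fun s : Ioc a b => |V s - Vm s|) {μ : SignedMeasure ℝ}
    (hμ : μ (Ioc a b) = V b - V a - ∑' s : Ioc a b, (V s - Vm s)) :
    IsAverageAt volume (passageMeasure V t) μ (Ioc a b) := by
  have heq := ae_passageMeasure_Ioc_eq hV hreg ha hab hbt
  obtain ⟨hint, hsum⟩ := integrable_and_hasSum_integral_tsum_levelCrossing hjump
  have hcross := integrable_levelCrossing (V a) (V b)
  exact ⟨(hcross.sub hint).congr (heq.mono fun _ => Eq.symm), by
    rw [integral_congr_ae heq, integral_sub hcross hint, integral_levelCrossing, hμ, hsum.tsum_eq]⟩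

theorem isAverageAt_restrict_passageMeasure_iff (hreg : ∀ᵐ x, IsRegularLevel V Vm t x)
    {μ : SignedMeasure ℝ} {S : Set ℝ} (hS : MeasurableSet S) :
    IsAverageAt volume (passageMeasure V t) (μ.restrict (Ioc 0 t)) S ↔
      IsAverageAt volume (passageMeasure V t) μ (S ∩ Ioc 0 t) := by
  have hpass : ∀ᵐ x, passageMeasure V t x S = passageMeasure V t x (S ∩ Ioc 0 t) := by
    filter_upwards [hreg] with x hx
    rw [hx.passageMeasure_apply hS, hx.passageMeasure_apply (hS.inter measurableSet_Ioc),
      inter_assoc, inter_self]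
  rw [IsAverageAt, IsAverageAt, integrable_congr hpass, integral_congr_ae hpass,
    VectorMeasure.restrict_apply _ measurableSet_Ioc hS]

theorem isAverageAt_passageMeasure (hV : IsCadlag V Vm) (hbv : BoundedVariationOn V (Icc 0 t))
    (ht : 0 ≤ t) (hjump : Summable fun s : Ioc (0 : ℝ) t => |V s - Vm s|) {μ : SignedMeasure ℝ}
    (hμ : ∀ a b : ℝ, 0 ≤ a → a ≤ b → b ≤ t →
      μ (Ioc a b) = V b - V a - ∑' s : Ioc a b, (V s - Vm s))
    {B : Set ℝ} (hB : MeasurableSet B) (hBt : B ⊆ Ioc 0 t) :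
    IsAverageAt volume (passageMeasure V t) μ B := by
  have hreg := ae_isRegularLevel hbv ht hjump
  obtain ⟨g, hg, hcount⟩ := exists_integrable_ncard_le_of_boundedVariationOn ht hbv
  have hdom : ∀ᵐ x, ∀ B, ‖passageMeasure V t x B‖ ≤ g x := by
    filter_upwards [hreg, hcount] with x hx hxg B
    exact (hx.norm_passageMeasure_le B).trans hxg.2
  have hIoc : ∀ a b : ℝ, 0 ≤ a → a ≤ b → b ≤ t →
      IsAverageAt volume (passageMeasure V t) μ (Ioc a b) := fun a b ha hab hbt => by
    have hjump_ab : Summable fun s : Ioc a b => |V s - Vm s| := by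
      simpa only [Function.comp_def, coe_inclusion] using
        hjump.comp_injective (inclusion_injective (Ioc_subset_Ioc ha hbt))
    exact isAverageAt_passageMeasure_Ioc hV hreg ha hab hbt hjump_ab (hμ a b ha hab hbt)
  have hgen : borel ℝ = MeasurableSpace.generateFrom {S | ∃ l u : ℝ, l < u ∧ Ioc l u = S} :=
    borel_eq_generateFrom_Ioc ℝ
  rw [← inter_eq_left.2 hBt, ← isAverageAt_restrict_passageMeasure_iff hreg hB]
  refine IsAverageAt.of_generateFrom hg hdom (BorelSpace.measurable_eq.trans hgen)
    (isPiSystem_Ioc id id) ?_ ?_ hB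
  · rw [isAverageAt_restrict_passageMeasure_iff hreg .univ, univ_inter]
    exact hIoc 0 t le_rfl ht le_rfl
  · rintro _ ⟨l, u, -, rfl⟩
    rw [isAverageAt_restrict_passageMeasure_iff hreg measurableSet_Ioc, Ioc_inter_Ioc]
    rcases le_or_gt (max l 0) (min u t) with h | h
    · exact hIoc _ _ (le_max_right _ _) h (min_le_right _ _)
    · simp [Ioc_eq_empty h.not_gt, IsAverageAt]

theorem integrableOn_and_setIntegral_signedLocalTime (hV : IsCadlag V Vm)
    (hbv : BoundedVariationOn V (Icc 0 t)) (ht : 0 ≤ t)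
    (hjump : Summable fun s : Ioc (0 : ℝ) t => |V s - Vm s|) {μ : SignedMeasure ℝ}
    (hμ : ∀ a b : ℝ, 0 ≤ a → a ≤ b → b ≤ t →
      μ (Ioc a b) = V b - V a - ∑' s : Ioc a b, (V s - Vm s))
    {A : Set ℝ} (hA : MeasurableSet A) :
    IntegrableOn (fun x => (signedLocalTime V x t : ℝ)) A ∧
      signedIntegral μ (Ioc 0 t) (fun s => A.indicator (fun _ => (1 : ℝ)) (V s)) =
        ∫ x in A, (signedLocalTime V x t : ℝ) := by
  have hpre : MeasurableSet (Ioc 0 t ∩ V ⁻¹' A) :=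
    measurableSet_inter_preimage_of_locallyBoundedVariationOn
      (hbv.mono Ioc_subset_Icc_self).locallyBoundedVariationOn measurableSet_Ioc hA
  have hlocal : (fun x => passageMeasure V t x (Ioc 0 t ∩ V ⁻¹' A)) =ᵐ[volume]
      A.indicator fun x => (signedLocalTime V x t : ℝ) :=
    (ae_isRegularLevel hbv ht hjump).mono fun x hx => hx.passageMeasure_preimage hpre
  obtain ⟨hint, havg⟩ := isAverageAt_passageMeasure hV hbv ht hjump hμ hpre inter_subset_left
  refine ⟨(integrable_indicator_iff hA).1 (hint.congr hlocal), ?_⟩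
  rw [signedIntegral_indicator_comp μ measurableSet_Ioc hpre, ← havg, integral_congr_ae hlocal,
    integral_indicator hA]

end Passages

/-- For a càdlàg function `V` on `[0,∞)` of finite variation on compacts,
with canonical decomposition `V = Vc + Vd`, and `μc` the signed Stieltjes measure of the
continuous part `Vc` (on `[0,t]`), the signed occupation measure
`θ_t(A) = ∫_0^t 1_A(V s) μc(ds)` is absolutely continuous with respect to Lebesgue measure,
with density `x ↦ ℓ^x(t)`; in particular `ℓ^x(t)` is well defined for a.e. `x` and
`θ_t(A) = ∫_A ℓ^x(t) dx` for every Borel set `A`. -/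
theorem signed_occupation_density
    (V Vm Vc Vd : ℝ → ℝ)
    (hV_rc : ∀ s ∈ Set.Ici (0 : ℝ), ContinuousWithinAt V (Set.Ici s) s)
    (hV_ll : ∀ s ∈ Set.Ioi (0 : ℝ),
      Filter.Tendsto V (nhdsWithin s (Set.Iio s)) (nhds (Vm s)))
    (hV_bv : ∀ T : ℝ, BoundedVariationOn V (Set.Icc 0 T))
    (hdecomp : ∀ s ∈ Set.Ici (0 : ℝ), V s = Vc s + Vd s)
    (hVc_cont : ContinuousOn Vc (Set.Ici 0))
    (hVc_bv : ∀ T : ℝ, BoundedVariationOn Vc (Set.Icc 0 T))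
    (hVd_sum : ∀ s ∈ Set.Ici (0 : ℝ),
      HasSum (fun u : Set.Ioc (0 : ℝ) s => V u.1 - Vm u.1) (Vd s))
    (hVd_abs : ∀ s ∈ Set.Ici (0 : ℝ),
      Summable (fun u : Set.Ioc (0 : ℝ) s => |V u.1 - Vm u.1|))
    (t : ℝ) (ht : 0 < t)
    (μc : MeasureTheory.SignedMeasure ℝ)
    (hμc : ∀ a b : ℝ, 0 ≤ a → a ≤ b → b ≤ t → μc (Set.Ioc a b) = Vc b - Vc a) :
    (∀ᵐ x : ℝ ∂volume, (incSet V x t).Finite ∧ (decSet V x t).Finite) ∧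
      MeasureTheory.Integrable (fun x : ℝ => (signedLocalTime V x t : ℝ)) volume ∧
      ∀ A : Set ℝ, MeasurableSet A →
        signedIntegral μc (Set.Ioc 0 t)
            (fun s => A.indicator (fun _ => (1 : ℝ)) (V s)) =
          ∫ x in A, (signedLocalTime V x t : ℝ) ∂volume := by
  have hμ : ∀ a b : ℝ, 0 ≤ a → a ≤ b → b ≤ t →
      μc (Ioc a b) = V b - V a - ∑' s : Ioc a b, (V s - Vm s) := fun a b ha hab hbt => by
    have hb : 0 ≤ b := ha.trans hab
    have hjump : HasSum (fun s : Ioc a b => V s - Vm s) (Vd b - Vd a) :=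
      hasSum_Ioc_sub (f := fun s => V s - Vm s) (hVd_sum a ha) (hVd_sum b hb) ha hab
    rw [hμc a b ha hab hbt, hjump.tsum_eq, hdecomp a ha, hdecomp b hb]
    ring
  have hdensity := fun {A : Set ℝ} => integrableOn_and_setIntegral_signedLocalTime (A := A)
    ⟨hV_rc, hV_ll⟩ (hV_bv t) ht.le (hVd_abs t ht.le) hμ
  have hreg := ae_isRegularLevel (hV_bv t) ht.le (hVd_abs t ht.le)
  exact ⟨hreg.mono fun x hx => ⟨hx.finite_incSet, hx.finite_decSet⟩,
    integrableOn_univ.1 (hdensity .univ).1, fun A hA => (hdensity hA).2⟩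
end
end

section
/- Let V : [0,∞) → ℝ be a right-continuous function with left limits, of finite variation on every compact interval, with canonical decomposition V = V^c + V^d into its continuous part V^c and pure-jump part V^d. For every t > 0 and every Borel set A ⊆ ℝ, the absolute occupation measure satisfies ϑ_t(A) = ∫_0^t 1_A(V(s)) |V^c(ds)| = ∫_A λ^x(t) dx; i.e., ϑ_t(dx) is absolutely continuous with respect to Lebesgue measure with density x ↦ λ^x(t). -/
open MeasureTheory Set Filter
open scoped ENNReal NNReal

noncomputable section

/-!
Measured by the clock `F s = s + (variation of V on [0,s])`, the function `V` becomes Lipschitz: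
`V = W ∘ F` with `W` `1`-Lipschitz on `ℝ`, each jump of `V` being filled in by a stretch of time
omitted from the range of `F`. The Stieltjes measure of `V` is therefore the image of `W' dr`
under the generalized inverse of `F`. That inverse is injective away from the countably many
jumps, so there the variation of the Stieltjes measure is the image of `|W'| dr`. Removing the
jumps from the Stieltjes measure of `V` leaves exactly that of `V^c`, and the area formula for `W`
turns `|V^c|(E)` into the integral over `x` of the number of solutions of `V s = x` in `E`.

Almost every level `x` is neither a critical value of `W` (Sard in dimension one) nor the value of
`V` at a jump. At such a level each solution of `V s = x` corresponds to a point where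
`W' ≠ 0` and is a transversal passage, hence an increase or a decrease through `x`.
-/

open Topology

lemma setIntegral_indicator_one_comp {α β : Type*} [MeasurableSpace α] {μ : Measure α} {f : α → β}
    {s : Set α} {A : Set β} (hs : MeasurableSet s) (hsA : MeasurableSet (s ∩ f ⁻¹' A)) :
    ∫ x in s, A.indicator (fun _ => (1 : ℝ)) (f x) ∂μ = μ.real (s ∩ f ⁻¹' A) := by
  rw [← integral_indicator_one hsA, ← integral_indicator hs]
  congr 1 with x
  rw [← indicator_indicator]
  rfl

lemma tsum_Ioc_sub_tsum_Ioc {α M : Type*} [LinearOrder α] [AddCommGroup M] [UniformSpace M]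
    [IsUniformAddGroup M] [CompleteSpace M] [T2Space M] {f : α → M} {a b c : α} (hab : a ≤ b)
    (hbc : b ≤ c) (hf : Summable fun u : Ioc a c => f u) :
    ∑' u : Ioc a c, f u - ∑' u : Ioc a b, f u = ∑' u : Ioc b c, f u := by
  have hsummable : ∀ {s : Set α}, s ⊆ Ioc a c → Summable fun u : s => f u := fun hs =>
    hf.comp_injective (inclusion_injective hs)
  rw [← Ioc_union_Ioc_eq_Ioc hab hbc, (hsummable (Ioc_subset_Ioc_right hbc)).tsum_union_disjoint
    (Ioc_disjoint_Ioc_of_le le_rfl) (hsummable (Ioc_subset_Ioc_left hab)), add_sub_cancel_left]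

section VectorMeasure

variable {α : Type*} [LinearOrder α] [TopologicalSpace α] [OrderTopology α]
  [SecondCountableTopology α] [MeasurableSpace α] [BorelSpace α]
  {M : Type*} [AddCommGroup M] [TopologicalSpace M] [T2Space M]

lemma vectorMeasure_restrict_Ioc_ext {μ ν : VectorMeasure α M} {a b : α}
    (h : ∀ c d, a ≤ c → c ≤ d → d ≤ b → μ (Ioc c d) = ν (Ioc c d)) :
    μ.restrict (Ioc a b) = ν.restrict (Ioc a b) := by
  have hIoc : ∀ c d, μ (Ioc c d ∩ Ioc a b) = ν (Ioc c d ∩ Ioc a b) := fun c d => by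
    rw [Ioc_inter_Ioc]
    rcases le_or_gt (c ⊔ a) (d ⊓ b) with hle | hlt
    · exact h _ _ le_sup_right hle inf_le_right
    · simp [Ioc_eq_empty_of_le hlt.le]
  refine VectorMeasure.ext_of_generateFrom _ ?_
    ((BorelSpace.measurable_eq (α := α)).trans (borel_eq_generateFrom_Ioc α))
    (isPiSystem_Ioc id id) ?_
  · rintro _ ⟨c, d, -, rfl⟩
    simpa only [VectorMeasure.restrict_apply _ measurableSet_Ioc measurableSet_Ioc] using hIoc c d
  · simpa only [VectorMeasure.restrict_apply_univ, inter_self] using hIoc a b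

end VectorMeasure

lemma variation_map_withDensityᵥ {α β E : Type*} [MeasurableSpace α] [MeasurableSpace β]
    [NormedAddCommGroup E] [NormedSpace ℝ E] [CompleteSpace E] {μ : Measure α} {f : α → E}
    (hf : Integrable f μ) {φ : α → β} {ψ : β → α} (hφ : Measurable φ) (hψ : Measurable ψ)
    (hψφ : ∀ᵐ x ∂μ, ψ (φ x) = x) :
    ((μ.withDensityᵥ f).map φ).variation = (μ.withDensity fun x => ‖f x‖ₑ).map φ := by
  have hψ_mp : MeasurePreserving ψ (μ.map φ) μ := ⟨hψ, by
    rw [Measure.map_map hψ hφ, Measure.map_congr (show ψ ∘ φ =ᵐ[μ] id from hψφ), Measure.map_id]⟩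
  have hfψ : Integrable (f ∘ ψ) (μ.map φ) := hψ_mp.integrable_comp_of_integrable hf
  have hmap : (μ.withDensityᵥ f).map φ = (μ.map φ).withDensityᵥ (f ∘ ψ) := by
    ext s hs
    rw [VectorMeasure.map_apply _ hφ hs, withDensityᵥ_apply hf (hφ hs), withDensityᵥ_apply hfψ hs,
      setIntegral_map hs hfψ.aestronglyMeasurable hφ.aemeasurable]
    refine integral_congr_ae (ae_restrict_of_ae ?_)
    filter_upwards [hψφ] with x hx
    rw [Function.comp_apply, hx]
  rw [hmap, Measure.variation_withDensityᵥ hfψ]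
  ext s hs
  rw [withDensity_apply _ hs, Measure.map_apply hφ hs, withDensity_apply _ (hφ hs),
    Measure.restrict_map hφ hs, lintegral_map' _ hφ.aemeasurable]
  · refine lintegral_congr_ae (ae_restrict_of_ae ?_)
    filter_upwards [hψφ] with x hx
    rw [Function.comp_apply, hx]
  · rw [← Measure.restrict_map hφ hs]
    exact hfψ.aestronglyMeasurable.enorm.restrict

lemma galoisConnection_sInf {α β : Type*} [ConditionallyCompleteLinearOrder α]
    [TopologicalSpace α] [OrderTopology α] [DenselyOrdered α] [NoMaxOrder α] [Nonempty α]
    [LinearOrder β] [NoMinOrder β] [TopologicalSpace β] [OrderClosedTopology β] {F : α → β}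
    (hF : Monotone F) (hrc : ∀ s, ContinuousWithinAt F (Ici s) s)
    (hbot : Tendsto F atBot atBot) (htop : Tendsto F atTop atTop) :
    GaloisConnection (fun r => sInf {s | r ≤ F s}) F := by
  intro r a
  have hbdd : BddBelow {s | r ≤ F s} := by
    obtain ⟨m, hm⟩ := (hbot.eventually_lt_atBot r).exists
    exact ⟨m, fun s hs => le_of_not_gt fun hsm => (hs.trans (hF hsm.le)).not_gt hm⟩
  have hne : {s | r ≤ F s}.Nonempty := (htop.eventually_ge_atTop r).exists
  refine ⟨fun h => ?_, fun h => csInf_le hbdd h⟩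
  refine ge_of_tendsto ((hrc a).tendsto.mono_left (nhdsWithin_mono _ Ioi_subset_Ici_self))
    (eventually_nhdsWithin_of_forall fun u hu => ?_)
  obtain ⟨s, hs, hsu⟩ := exists_lt_of_csInf_lt hne (lt_of_le_of_lt h hu)
  exact le_trans hs (hF hsu.le)

lemma exists_boundedVariationOn_univ_extension {V : ℝ → ℝ} {a b : ℝ} (hab : a ≤ b)
    (hV : BoundedVariationOn V (Icc a b)) (hrc : ∀ s ∈ Icc a b, ContinuousWithinAt V (Icc s b) s) :
    ∃ U : ℝ → ℝ, BoundedVariationOn U univ ∧ (∀ s, ContinuousWithinAt U (Ici s) s) ∧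
      EqOn U V (Icc a b) := by
  let clamp : ℝ → ℝ := fun s => projIcc a b hab s
  have hmono : Monotone clamp := monotone_projIcc hab
  have hcont : Continuous clamp := continuous_subtype_val.comp continuous_projIcc
  have hmaps : ∀ s, clamp s ∈ Icc a b := fun s => (projIcc a b hab s).2
  refine ⟨V ∘ clamp, ?_, fun s => ?_, fun s hs => ?_⟩
  · exact ne_top_of_le_ne_top hV
      (eVariationOn.comp_le_of_monotoneOn V clamp (hmono.monotoneOn univ) fun s _ => hmaps s)
  · exact (hrc _ (hmaps s)).comp hcont.continuousWithinAt fun u hu => ⟨hmono hu, (hmaps u).2⟩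
  · rw [Function.comp_apply, show clamp s = s by simp only [clamp, projIcc_of_mem hab hs]]

/-- The Banach indicatrix of `f` on `s`: the number of solutions of `f x = y` in `s`, valued in
`ℝ≥0∞` so that it can be integrated in `y`. -/
def banachIndicatrix {α β : Type*} (f : α → β) (s : Set α) (y : β) : ℝ≥0∞ :=
  ((s ∩ f ⁻¹' {y}).encard : ℝ≥0∞)

section BanachIndicatrix

variable {α β γ : Type*} {f g : α → β} {s t : Set α}

lemma banachIndicatrix_of_injOn (hf : InjOn f s) (y : β) :
    banachIndicatrix f s y = (f '' s).indicator 1 y := by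
  by_cases hy : y ∈ f '' s
  · obtain ⟨x, hx, rfl⟩ := hy
    have : s ∩ f ⁻¹' {f x} = {x} := by
      ext z
      exact ⟨fun hz => hf hz.1 hx hz.2, by rintro rfl; exact ⟨hx, rfl⟩⟩
    simp [banachIndicatrix, this, mem_image_of_mem f hx]
  · have : s ∩ f ⁻¹' {y} = ∅ := by
      ext z
      exact ⟨fun hz => hy ⟨z, hz.1, hz.2⟩, fun hz => hz.elim⟩
    simp [banachIndicatrix, this, hy]

lemma banachIndicatrix_iUnion {ι : Type*} [Countable ι] {s : ι → Set α}
    (hs : Pairwise (Function.onFun Disjoint s)) (y : β) :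
    banachIndicatrix f (⋃ i, s i) y = ∑' i, banachIndicatrix f (s i) y := by
  let : MeasurableSpace α := ⊤
  simp only [banachIndicatrix, ← Measure.count_apply MeasurableSpace.measurableSet_top,
    iUnion_inter]
  exact measure_iUnion (fun i j hij => (hs hij).mono inter_subset_left inter_subset_left)
    fun _ => MeasurableSpace.measurableSet_top

lemma banachIndicatrix_inter_preimage (A : Set β) (y : β) :
    banachIndicatrix f (s ∩ f ⁻¹' A) y = A.indicator (banachIndicatrix f s) y := by
  by_cases hy : y ∈ A
  · rw [indicator_of_mem hy, banachIndicatrix, banachIndicatrix, inter_assoc, ← preimage_inter,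
      inter_eq_right.2 (singleton_subset_iff.2 hy)]
  · rw [indicator_of_notMem hy, banachIndicatrix, inter_assoc, ← preimage_inter,
      inter_singleton_eq_empty.2 hy, preimage_empty, inter_empty]
    simp

lemma banachIndicatrix_congr (h : EqOn f g s) (y : β) :
    banachIndicatrix f s y = banachIndicatrix g s y := by
  have : s ∩ f ⁻¹' {y} = s ∩ g ⁻¹' {y} := by
    ext x
    simp only [mem_inter_iff, mem_preimage, mem_singleton_iff]
    exact and_congr_right fun hx => by rw [h hx]
  rw [banachIndicatrix, this, banachIndicatrix]

lemma banachIndicatrix_image {φ : γ → α} {s : Set γ} (hφ : InjOn φ s) (y : β) :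
    banachIndicatrix f (φ '' s) y = banachIndicatrix (f ∘ φ) s y := by
  rw [banachIndicatrix, banachIndicatrix, ← image_inter_preimage,
    (hφ.mono inter_subset_left).encard_image, preimage_comp]

lemma banachIndicatrix_sdiff (y : β) (hy : y ∉ f '' t) :
    banachIndicatrix f (s \ t) y = banachIndicatrix f s y := by
  have : (s \ t) ∩ f ⁻¹' {y} = s ∩ f ⁻¹' {y} := by
    ext x
    exact ⟨fun hx => ⟨hx.1.1, hx.2⟩, fun hx => ⟨⟨hx.1, fun hxt => hy ⟨x, hxt, hx.2⟩⟩, hx.2⟩⟩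
  rw [banachIndicatrix, this, banachIndicatrix]

end BanachIndicatrix

section AreaFormula

variable {E : Type*} [NormedAddCommGroup E] [NormedSpace ℝ E] [FiniteDimensional ℝ E]
  [MeasurableSpace E] [BorelSpace E] {f : E → E} {f' : E → E →L[ℝ] E} {s : Set E}

lemma exists_measurable_partition_injOn_of_det_ne_zero (hs : MeasurableSet s)
    (hf : ∀ x ∈ s, HasFDerivWithinAt f (f' x) s x) (hdet : ∀ x ∈ s, (f' x).det ≠ 0) :
    ∃ u : ℕ → Set E, Pairwise (Function.onFun Disjoint u) ∧ (∀ n, MeasurableSet (u n)) ∧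
      (⋃ n, u n) = s ∧ ∀ n, InjOn f (u n) := by
  classical
  let r : (E →L[ℝ] E) → ℝ≥0 := fun A =>
    if h : A.det ≠ 0 then (‖((A.toContinuousLinearEquivOfDetNeZero h).symm : E →L[ℝ] E)‖₊ + 1)⁻¹
    else 1
  have hr : ∀ A, r A ≠ 0 := fun A => by
    simp only [r]
    split_ifs <;> simp
  obtain ⟨u, A, hdisj, hu, hsu, happrox, hA⟩ :=
    exists_partition_approximatesLinearOn_of_hasFDerivWithinAt f s f' hf r hr
  refine ⟨fun n => s ∩ u n, fun i j hij => (hdisj hij).mono inter_subset_right inter_subset_right,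
    fun n => hs.inter (hu n), by rw [← inter_iUnion, inter_eq_left.2 hsu], fun n => ?_⟩
  rcases s.eq_empty_or_nonempty with rfl | hne
  · simp
  obtain ⟨x, hx, hAx⟩ := hA hne n
  have hAn : (A n).det ≠ 0 := hAx ▸ hdet x hx
  let B := (A n).toContinuousLinearEquivOfDetNeZero hAn
  have happroxB : ApproximatesLinearOn f (B : E →L[ℝ] E) (s ∩ u n)
      (‖(B.symm : E →L[ℝ] E)‖₊ + 1)⁻¹ := by
    simpa [r, hAn, B] using happrox n
  refine happroxB.injOn (B.subsingleton_or_nnnorm_symm_pos.imp_right fun hpos => ?_)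
  exact inv_strictAnti₀ hpos (lt_add_one _)

variable (μ : Measure E) [μ.IsAddHaarMeasure]

lemma lintegral_banachIndicatrix_of_det_ne_zero (hs : MeasurableSet s)
    (hf : ∀ x ∈ s, HasFDerivWithinAt f (f' x) s x) (hdet : ∀ x ∈ s, (f' x).det ≠ 0) :
    Measurable (banachIndicatrix f s) ∧
      ∫⁻ y, banachIndicatrix f s y ∂μ = ∫⁻ x in s, ENNReal.ofReal |(f' x).det| ∂μ := by
  obtain ⟨u, hdisj, hu, rfl, hinj⟩ := exists_measurable_partition_injOn_of_det_ne_zero hs hf hdet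
  have hf' : ∀ n, ∀ x ∈ u n, HasFDerivWithinAt f (f' x) (u n) x := fun n x hx =>
    (hf x (mem_iUnion_of_mem n hx)).mono (subset_iUnion u n)
  have himage : ∀ n, MeasurableSet (f '' u n) := fun n =>
    measurable_image_of_fderivWithin (hu n) (hf' n) (hinj n)
  have hsum : banachIndicatrix f (⋃ n, u n) = fun y => ∑' n, (f '' u n).indicator 1 y := by
    ext y
    rw [banachIndicatrix_iUnion hdisj]
    exact tsum_congr fun n => banachIndicatrix_of_injOn (hinj n) y
  have hmeas : ∀ n, Measurable ((f '' u n).indicator (1 : E → ℝ≥0∞)) := fun n =>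
    measurable_one.indicator (himage n)
  rw [hsum]
  refine ⟨Measurable.tsum hmeas, ?_⟩
  calc ∫⁻ y, ∑' n, (f '' u n).indicator 1 y ∂μ
      = ∑' n, μ (f '' u n) := by
        rw [lintegral_tsum fun n => (hmeas n).aemeasurable]
        exact tsum_congr fun n => lintegral_indicator_one (himage n)
    _ = ∑' n, ∫⁻ x in u n, ENNReal.ofReal |(f' x).det| ∂μ :=
        tsum_congr fun n =>
          (lintegral_abs_det_fderiv_eq_addHaar_image μ (hu n) (hf' n) (hinj n)).symm
    _ = ∫⁻ x in ⋃ n, u n, ENNReal.ofReal |(f' x).det| ∂μ := (lintegral_iUnion hu hdisj _).symm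

end AreaFormula

section Lipschitz

variable {W : ℝ → ℝ} {K : ℝ≥0}

/-- The critical points of a real function, points of non-differentiability included (there
`deriv` takes the junk value `0`). -/
def criticalSet (W : ℝ → ℝ) : Set ℝ := {r | deriv W r = 0}

lemma volume_image_criticalSet (hW : LipschitzWith K W) : volume (W '' criticalSet W) = 0 := by
  have hcover : criticalSet W ⊆ {r | ¬ DifferentiableAt ℝ W r} ∪
      {r | DifferentiableAt ℝ W r ∧ deriv W r = 0} := fun r hr =>
    (em (DifferentiableAt ℝ W r)).symm.imp_right fun h => ⟨h, hr⟩
  refine measure_mono_null (image_mono hcover) ?_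
  rw [image_union]
  refine measure_union_null ?_ ?_
  · have hnull : μH[1] {r | ¬ DifferentiableAt ℝ W r} = 0 := by
      rw [hausdorffMeasure_real]
      exact hW.ae_differentiableAt_real
    have := hW.lipschitzOnWith.hausdorffMeasure_image_le
      (s := {r | ¬ DifferentiableAt ℝ W r}) zero_le_one
    rwa [hnull, mul_zero, nonpos_iff_eq_zero, hausdorffMeasure_real] at this
  · refine addHaar_image_eq_zero_of_det_fderivWithin_eq_zero (f' := fderiv ℝ W) volume
      (fun r hr => hr.1.hasFDerivAt.hasFDerivWithinAt) fun r hr => ?_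
    simp [← toSpanSingleton_deriv, hr.2]

theorem lintegral_banachIndicatrix_of_lipschitz (hW : LipschitzWith K W) {R : Set ℝ}
    (hR : MeasurableSet R) :
    AEMeasurable (banachIndicatrix W R) ∧
      ∫⁻ x, banachIndicatrix W R x = ∫⁻ r in R, ‖deriv W r‖ₑ := by
  have hcrit : MeasurableSet (criticalSet W) := measurable_deriv W (measurableSet_singleton 0)
  have hae : banachIndicatrix W (R \ criticalSet W) =ᵐ[volume] banachIndicatrix W R := by
    filter_upwards [measure_eq_zero_iff_ae_notMem.1 (volume_image_criticalSet hW)] with x hx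
    exact banachIndicatrix_sdiff x hx
  obtain ⟨hmeas, harea⟩ := lintegral_banachIndicatrix_of_det_ne_zero volume (hR.diff hcrit)
    (f' := fderiv ℝ W)
    (fun r hr => (differentiableAt_of_deriv_ne_zero hr.2).hasFDerivAt.hasFDerivWithinAt)
    (fun r hr => by
      rw [← toSpanSingleton_deriv, ContinuousLinearMap.det_toSpanSingleton]
      exact hr.2)
  refine ⟨hmeas.aemeasurable.congr hae, ?_⟩
  calc ∫⁻ x, banachIndicatrix W R x
      = ∫⁻ x, banachIndicatrix W (R \ criticalSet W) x := (lintegral_congr_ae hae).symm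
    _ = ∫⁻ r in R \ criticalSet W, ‖deriv W r‖ₑ := by
        rw [harea]
        simp [← toSpanSingleton_deriv, ← Real.norm_eq_abs]
    _ = ∫⁻ r in R, ‖deriv W r‖ₑ := by
        rw [← lintegral_inter_add_sdiff _ R hcrit,
          setLIntegral_congr_fun (hR.inter hcrit) fun r hr => by rw [hr.2, enorm_zero]]
        simp

end Lipschitz

section LengthClock

/-- The clock `s ↦ s + (variation of U between 0 and s)`. Reading `U` in this clock makes it
`1`-Lipschitz, each jump being traversed at unit speed; the summand `s` makes it strictly
increasing. -/
def lengthClock (U : ℝ → ℝ) (s : ℝ) : ℝ := s + variationOnFromTo U univ 0 s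

/-- The generalized inverse of `lengthClock U`. -/
def lengthClockInv (U : ℝ → ℝ) (r : ℝ) : ℝ := sInf {s | r ≤ lengthClock U s}

variable {U : ℝ → ℝ} (hU : BoundedVariationOn U univ)
include hU

lemma abs_sub_add_sub_le_lengthClock_sub {a b : ℝ} (hab : a ≤ b) :
    |U b - U a| + (b - a) ≤ lengthClock U b - lengthClock U a := by
  have := variationOnFromTo.abs_sub_le_sub_of_le hU.locallyBoundedVariationOn
    (mem_univ 0) (mem_univ a) (mem_univ b) hab
  simp only [lengthClock]
  linarith

lemma strictMono_lengthClock : StrictMono (lengthClock U) := fun a b hab => by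
  have := abs_sub_add_sub_le_lengthClock_sub hU hab.le
  linarith [abs_nonneg (U b - U a)]

lemma abs_sub_le_abs_lengthClock_sub (a b : ℝ) :
    |U a - U b| ≤ |lengthClock U a - lengthClock U b| := by
  wlog hba : b ≤ a generalizing a b
  · rw [abs_sub_comm, abs_sub_comm (lengthClock U a)]
    exact this b a (le_of_not_ge hba)
  · have := abs_sub_add_sub_le_lengthClock_sub hU hba
    exact le_trans (by linarith) (le_abs_self _)

lemma exists_lipschitzWith_comp_lengthClock :
    ∃ W : ℝ → ℝ, LipschitzWith 1 W ∧ W ∘ lengthClock U = U := by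
  obtain ⟨W, hW⟩ : ∃ W : ℝ → ℝ, W ∘ lengthClock U = U :=
    ⟨_, Function.extend_comp (strictMono_lengthClock hU).injective U 0⟩
  have hlip : LipschitzOnWith 1 W (range (lengthClock U)) := by
    refine LipschitzOnWith.of_dist_le_mul ?_
    rintro _ ⟨a, rfl⟩ _ ⟨b, rfl⟩
    rw [NNReal.coe_one, one_mul, Real.dist_eq, Real.dist_eq]
    exact (congrArg₂ (fun x y => |x - y|) (congrFun hW a) (congrFun hW b)).trans_le
      (abs_sub_le_abs_lengthClock_sub hU a b)
  obtain ⟨W', hW', hWW'⟩ := hlip.extend_real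
  exact ⟨W', hW', funext fun s => (hWW' (mem_range_self s)).symm.trans (congrFun hW s)⟩

lemma continuousAt_lengthClock_iff {s : ℝ} : ContinuousAt (lengthClock U) s ↔ ContinuousAt U s := by
  refine ⟨fun h => ?_, fun h => ?_⟩
  · obtain ⟨W, hW, hWU⟩ := exists_lipschitzWith_comp_lengthClock hU
    exact (hW.continuous.continuousAt.comp h).congr (.of_eq hWU)
  · have hmono : Monotone (variationOnFromTo U univ 0) := monotoneOn_univ.1
      (variationOnFromTo.monotoneOn hU.locallyBoundedVariationOn (mem_univ 0))
    refine continuousAt_id.add (hmono.continuousAt_iff_leftLim_eq_rightLim.2 ?_)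
    rw [variationOnFromTo.leftLim_eq hU, variationOnFromTo.rightLim_eq hU,
      h.continuousWithinAt.leftLim_eq, h.continuousWithinAt.rightLim_eq, dist_self, sub_zero,
      add_zero]

lemma countable_not_continuousAt : {s | ¬ ContinuousAt U s}.Countable := by
  simpa only [continuousAt_lengthClock_iff hU] using
    (strictMono_lengthClock hU).monotone.countable_not_continuousAt

variable (hrc : ∀ s, ContinuousWithinAt U (Ici s) s)
include hrc

lemma galoisConnection_lengthClock : GaloisConnection (lengthClockInv U) (lengthClock U) := by
  refine galoisConnection_sInf (strictMono_lengthClock hU).monotone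
    (fun s => continuousWithinAt_id.add (hU.continuousWithinAt_variationOnFromTo_Ici (hrc s)))
    ?_ ?_
  · refine tendsto_atBot_mono' _ ?_ tendsto_id
    filter_upwards [eventually_le_atBot 0] with s hs
    simpa [lengthClock] using variationOnFromTo.nonpos_of_ge U univ hs
  · refine tendsto_atTop_mono' _ ?_ tendsto_id
    filter_upwards [eventually_ge_atTop 0] with s hs
    simpa [lengthClock] using variationOnFromTo.nonneg_of_le U univ hs

lemma measurable_lengthClockInv : Measurable (lengthClockInv U) :=
  (galoisConnection_lengthClock hU hrc).monotone_l.measurable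

lemma lengthClockInv_lengthClock (s : ℝ) : lengthClockInv U (lengthClock U s) = s :=
  (strictMono_lengthClock hU).injective ((galoisConnection_lengthClock hU hrc).u_l_u_eq_u s)

lemma lengthClock_lengthClockInv {r : ℝ} (hr : ContinuousAt U (lengthClockInv U r)) :
    lengthClock U (lengthClockInv U r) = r := by
  have hgc := galoisConnection_lengthClock hU hrc
  refine le_antisymm ?_ (hgc.le_u_l r)
  refine le_of_tendsto (((continuousAt_lengthClock_iff hU).2 hr).tendsto.mono_left
    (nhdsWithin_le_nhds (s := Iio (lengthClockInv U r))))
    (eventually_nhdsWithin_of_forall fun u hu => ?_)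
  exact (lt_of_not_ge fun h => (hgc.l_le h).not_gt hu).le

lemma preimage_lengthClockInv_Ioc (a b : ℝ) :
    lengthClockInv U ⁻¹' Ioc a b = Ioc (lengthClock U a) (lengthClock U b) := by
  have hgc := galoisConnection_lengthClock hU hrc
  ext r
  exact and_congr hgc.lt_iff_lt (hgc r b)

end LengthClock

section Indicatrix

variable {U W : ℝ → ℝ} {K : ℝ≥0} {a b : ℝ} (hU : BoundedVariationOn U univ)
  (hrc : ∀ s, ContinuousWithinAt U (Ici s) s) (hW : LipschitzWith K W)
  (hWU : W ∘ lengthClock U = U)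

include hW in
lemma integrableOn_deriv_of_lipschitzWith : IntegrableOn (deriv W) (Ioc a b) := by
  refine Measure.integrableOn_of_bounded (M := K) measure_Ioc_lt_top.ne
    (measurable_deriv W).aestronglyMeasurable (ae_of_all _ fun r => ?_)
  exact norm_deriv_le_of_lipschitz hW

include hrc hW hWU

lemma vectorMeasure_restrict_Ioc_eq_map_withDensityᵥ :
    hU.vectorMeasure.restrict (Ioc a b) =
      (((volume.restrict (Ioc (lengthClock U a) (lengthClock U b))).withDensityᵥ
        (deriv W)).map (lengthClockInv U)).restrict (Ioc a b) := by
  refine vectorMeasure_restrict_Ioc_ext fun c d hac hcd hdb => ?_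
  have hmono := (strictMono_lengthClock hU).monotone
  have hac' := hmono hac
  have hcd' := hmono hcd
  have hdb' := hmono hdb
  rw [hU.vectorMeasure_Ioc hcd, (hrc d).rightLim_eq, (hrc c).rightLim_eq,
    VectorMeasure.map_apply _ (measurable_lengthClockInv hU hrc) measurableSet_Ioc,
    preimage_lengthClockInv_Ioc hU hrc,
    withDensityᵥ_apply (integrableOn_deriv_of_lipschitzWith hW) measurableSet_Ioc,
    Measure.restrict_restrict_of_subset (Ioc_subset_Ioc hac' hdb'),
    ← intervalIntegral.integral_of_le hcd',
    hW.lipschitzOnWith.absolutelyContinuousOnInterval.integral_deriv_eq_sub]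
  exact (congrArg₂ (· - ·) (congrFun hWU d) (congrFun hWU c)).symm

variable {S : Set ℝ} (hS : MeasurableSet S) (hSab : S ⊆ Ioc a b)
  (hcont : ∀ s ∈ S, ContinuousAt U s)
include hS hSab hcont

lemma vectorMeasure_variation_eq_lintegral_deriv :
    hU.vectorMeasure.variation S = ∫⁻ r in lengthClockInv U ⁻¹' S, ‖deriv W r‖ₑ := by
  have hτ := measurable_lengthClockInv hU hrc
  have hsub : lengthClockInv U ⁻¹' S ⊆ Ioc (lengthClock U a) (lengthClock U b) :=
    (preimage_mono hSab).trans (preimage_lengthClockInv_Ioc hU hrc a b).subset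
  have hint : IntegrableOn (deriv W) (Ioc (lengthClock U a) (lengthClock U b)) :=
    integrableOn_deriv_of_lipschitzWith hW
  have hrestrict : hU.vectorMeasure.restrict S =
      ((volume.restrict (lengthClockInv U ⁻¹' S)).withDensityᵥ (deriv W)).map
        (lengthClockInv U) := by
    rw [← inter_eq_left.2 hSab, ← VectorMeasure.restrict_restrict _ hS measurableSet_Ioc,
      vectorMeasure_restrict_Ioc_eq_map_withDensityᵥ hU hrc hW hWU,
      VectorMeasure.restrict_restrict _ hS measurableSet_Ioc, inter_eq_left.2 hSab]
    ext s hs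
    rw [VectorMeasure.restrict_apply _ hS hs, VectorMeasure.map_apply _ hτ (hs.inter hS),
      VectorMeasure.map_apply _ hτ hs, withDensityᵥ_apply hint (hτ (hs.inter hS)),
      withDensityᵥ_apply (hint.mono_set hsub) (hτ hs), Measure.restrict_restrict (hτ hs),
      Measure.restrict_restrict_of_subset ((preimage_mono inter_subset_right).trans hsub),
      preimage_inter]
  have hinv : ∀ᵐ r ∂volume.restrict (lengthClockInv U ⁻¹' S),
      lengthClock U (lengthClockInv U r) = r :=
    ae_restrict_of_forall_mem (hτ hS) fun r hr =>
      lengthClock_lengthClockInv hU hrc (hcont _ hr)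
  calc hU.vectorMeasure.variation S
      = (hU.vectorMeasure.restrict S).variation univ := by
        rw [VectorMeasure.variation_restrict hS, Measure.restrict_apply_univ]
    _ = ∫⁻ r in lengthClockInv U ⁻¹' S, ‖deriv W r‖ₑ := by
        rw [hrestrict, variation_map_withDensityᵥ (hint.mono_set hsub) hτ
          (strictMono_lengthClock hU).monotone.measurable hinv,
          Measure.map_apply hτ MeasurableSet.univ, preimage_univ,
          withDensity_apply _ MeasurableSet.univ, Measure.restrict_univ]

end Indicatrix

theorem lintegral_banachIndicatrix_eq_vectorMeasure_variation {U : ℝ → ℝ}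
    (hU : BoundedVariationOn U univ) (hrc : ∀ s, ContinuousWithinAt U (Ici s) s) {E : Set ℝ}
    (hE : MeasurableSet E) {a b : ℝ} (hEab : E ⊆ Ioc a b) :
    AEMeasurable (banachIndicatrix U E) ∧
      ∫⁻ x, banachIndicatrix U E x =
        hU.vectorMeasure.variation (E \ {s | ¬ ContinuousAt U s}) := by
  obtain ⟨W, hW, hWU⟩ := exists_lipschitzWith_comp_lengthClock hU
  have hD := countable_not_continuousAt hU
  have hS := hE.diff hD.measurableSet
  set S := E \ {s | ¬ ContinuousAt U s}
  have hcont : ∀ s ∈ S, ContinuousAt U s := fun s hs => not_not.1 hs.2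
  have himage : lengthClockInv U ⁻¹' S = lengthClock U '' S := by
    ext r
    refine ⟨fun hr => ⟨_, hr, lengthClock_lengthClockInv hU hrc (hcont _ hr)⟩, ?_⟩
    rintro ⟨s, hs, rfl⟩
    rwa [mem_preimage, lengthClockInv_lengthClock hU hrc]
  have hindicatrix : banachIndicatrix W (lengthClockInv U ⁻¹' S) =ᵐ[volume]
      banachIndicatrix U E := by
    filter_upwards [measure_eq_zero_iff_ae_notMem.1 ((hD.image U).measure_zero volume)] with x hx
    rw [himage, banachIndicatrix_image (strictMono_lengthClock hU).injective.injOn, hWU,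
      banachIndicatrix_sdiff x hx]
  obtain ⟨hmeas, hint⟩ := lintegral_banachIndicatrix_of_lipschitz hW
    (measurable_lengthClockInv hU hrc hS)
  refine ⟨hmeas.congr hindicatrix, ?_⟩
  rw [← lintegral_congr_ae hindicatrix, hint, vectorMeasure_variation_eq_lintegral_deriv hU hrc
    hW hWU hS (sdiff_subset.trans hEab) hcont]

section ContinuousPart

variable {U : ℝ → ℝ} (hU : BoundedVariationOn U univ)
  (hrc : ∀ s, ContinuousWithinAt U (Ici s) s)
include hrc

lemma vectorMeasure_inter_not_continuousAt (B : Set ℝ) :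
    hU.vectorMeasure (B ∩ {s | ¬ ContinuousAt U s}) = ∑' s : B, (U s - U.leftLim s) := by
  have hcountable : (B ∩ {s | ¬ ContinuousAt U s}).Countable :=
    (countable_not_continuousAt hU).mono inter_subset_right
  have hmass : ∀ s, U s - U.leftLim s = hU.vectorMeasure {s} := fun s => by
    rw [hU.vectorMeasure_singleton, (hrc s).rightLim_eq]
  have hjump : {s | ¬ ContinuousAt U s}.indicator (fun s => U s - U.leftLim s) =
      fun s => U s - U.leftLim s := indicator_eq_self.2 fun s hs hcont =>
    hs (sub_eq_zero.2 hcont.continuousWithinAt.leftLim_eq.symm)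
  calc hU.vectorMeasure (B ∩ {s | ¬ ContinuousAt U s})
      = ∑' s : ↥(B ∩ {s | ¬ ContinuousAt U s}), hU.vectorMeasure {↑s} := by
        rw [← VectorMeasure.of_biUnion hcountable
          (fun _ _ _ _ hne => disjoint_singleton.2 hne) fun s _ => measurableSet_singleton s,
          biUnion_of_singleton]
    _ = ∑' s : B, (U s - U.leftLim s) := by
        simp only [← hmass]
        rw [tsum_subtype (B ∩ _) fun s => U s - U.leftLim s, ← indicator_indicator, hjump,
          ← tsum_subtype]

variable {μc : SignedMeasure ℝ} {a b : ℝ} (hμc : ∀ c d, a ≤ c → c ≤ d → d ≤ b →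
  μc (Ioc c d) = U d - U c - ∑' s : Ioc c d, (U s - U.leftLim s))
include hμc

lemma totalVariation_eq_vectorMeasure_variation_sdiff {E : Set ℝ} (hE : MeasurableSet E)
    (hEab : E ⊆ Ioc a b) :
    μc.totalVariation E = hU.vectorMeasure.variation (E \ {s | ¬ ContinuousAt U s}) := by
  set D := {s | ¬ ContinuousAt U s}
  have hD : MeasurableSet D := (countable_not_continuousAt hU).measurableSet
  have hrestrict : μc.restrict (Ioc a b) = (hU.vectorMeasure.restrict Dᶜ).restrict (Ioc a b) := by
    refine vectorMeasure_restrict_Ioc_ext fun c d hac hcd hdb => ?_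
    rw [hμc c d hac hcd hdb, VectorMeasure.restrict_apply _ hD.compl measurableSet_Ioc,
      ← vectorMeasure_inter_not_continuousAt hU hrc, ← Set.sdiff_eq,
      ← sdiff_inter_self_eq_sdiff, inter_comm D,
      VectorMeasure.of_sdiff (measurableSet_Ioc.inter hD) measurableSet_Ioc inter_subset_left,
      hU.vectorMeasure_Ioc hcd, (hrc d).rightLim_eq, (hrc c).rightLim_eq]
  calc μc.totalVariation E
      = (μc.restrict (Ioc a b)).variation E := by
        rw [SignedMeasure.totalVariation_eq_variation,
          VectorMeasure.variation_restrict measurableSet_Ioc, Measure.restrict_eq_self _ hEab]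
    _ = hU.vectorMeasure.variation (E \ D) := by
        rw [hrestrict, VectorMeasure.variation_restrict measurableSet_Ioc,
          Measure.restrict_eq_self _ hEab, VectorMeasure.variation_restrict hD.compl,
          Measure.restrict_apply hE, Set.sdiff_eq]

include hU in
theorem lintegral_banachIndicatrix_eq_totalVariation {E : Set ℝ} (hE : MeasurableSet E)
    (hEab : E ⊆ Ioc a b) :
    AEMeasurable (banachIndicatrix U E) ∧
      ∫⁻ x, banachIndicatrix U E x = μc.totalVariation E := by
  rw [totalVariation_eq_vectorMeasure_variation_sdiff hU hrc hμc hE hEab]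
  exact lintegral_banachIndicatrix_eq_vectorMeasure_variation hU hrc hE hEab

end ContinuousPart

section Passages

variable {V : ℝ → ℝ} {x s : ℝ}

lemma increasesThrough_iff_eventually_sign (hs : 0 < s) :
    IncreasesThrough V x s ↔ V s = x ∧ ContinuousAt V s ∧
      ∀ᶠ u in 𝓝 s, SignType.sign (V u - V s) = SignType.sign (u - s) := by
  have hnonneg : Ici 0 ∈ 𝓝 s := Ici_mem_nhds hs
  have hsign : ∀ u, SignType.sign (V u - V s) = SignType.sign (u - s) ↔
      (u < s → V u < V s) ∧ (s < u → V s < V u) := fun u => by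
    rcases lt_trichotomy u s with h | rfl | h
    · simp [h, h.le, sign_neg (sub_neg.2 h), sign_eq_neg_one_iff]
    · simp
    · simp [h, h.le, sign_pos (sub_pos.2 h), sign_eq_one_iff]
  have hnhds : (∃ ε > 0, ∀ u ∈ Ici (0 : ℝ), |u - s| < ε →
      (u < s → V u < V s) ∧ (s < u → V s < V u)) ↔
      ∀ᶠ u in 𝓝 s, SignType.sign (V u - V s) = SignType.sign (u - s) := by
    rw [← nhdsWithin_eq_nhds.2 hnonneg, eventually_nhdsWithin_iff, Metric.eventually_nhds_iff]
    simp only [hsign, Real.dist_eq]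
    exact exists_congr fun ε => and_congr_right fun _ => forall_congr' fun u => imp.swap
  simp only [IncreasesThrough, hs, true_and, hnhds, continuousWithinAt_iff_continuousAt hnonneg]

lemma decreasesThrough_iff_eventually_sign (hs : 0 < s) :
    DecreasesThrough V x s ↔ V s = x ∧ ContinuousAt V s ∧
      ∀ᶠ u in 𝓝 s, SignType.sign (V u - V s) = SignType.sign (s - u) := by
  have hsign : ∀ u, SignType.sign (-V u - -V s) = SignType.sign (u - s) ↔
      SignType.sign (V u - V s) = SignType.sign (s - u) := fun u => by
    rw [← neg_inj, ← Left.sign_neg, ← Left.sign_neg, neg_sub_neg, neg_sub, neg_sub]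
  rw [DecreasesThrough, increasesThrough_iff_eventually_sign hs]
  have hcont : ContinuousAt (fun u => -V u) s ↔ ContinuousAt V s :=
    ⟨fun h => (neg_neg V) ▸ h.neg, ContinuousAt.neg⟩
  simp only [neg_inj, hsign, hcont]

lemma disjoint_incSet_decSet (V : ℝ → ℝ) (x t : ℝ) : Disjoint (incSet V x t) (decSet V x t) := by
  refine disjoint_left.2 fun s hinc hdec => ?_
  have hs := hinc.1.1
  obtain ⟨u, ⟨hup, hdown⟩, hsu⟩ :=
    ((((increasesThrough_iff_eventually_sign hs).1 hinc.2).2.2.and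
      ((decreasesThrough_iff_eventually_sign hs).1 hdec.2).2.2).filter_mono
        nhdsWithin_le_nhds |>.and (self_mem_nhdsWithin (s := Ioi s))).exists
  rw [hup, sign_pos (sub_pos.2 hsu), sign_neg (sub_neg.2 hsu)] at hdown
  exact absurd hdown (by decide)

lemma ae_continuousAt_and_eventually_sign {U : ℝ → ℝ} (hU : BoundedVariationOn U univ) :
    ∀ᵐ x, ∀ s, U s = x → ContinuousAt U s ∧
      ((∀ᶠ u in 𝓝 s, SignType.sign (U u - U s) = SignType.sign (u - s)) ∨
        ∀ᶠ u in 𝓝 s, SignType.sign (U u - U s) = SignType.sign (s - u)) := by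
  obtain ⟨W, hW, hWU⟩ := exists_lipschitzWith_comp_lengthClock hU
  have hF := strictMono_lengthClock hU
  have hWF : ∀ s, W (lengthClock U s) = U s := congrFun hWU
  filter_upwards [measure_eq_zero_iff_ae_notMem.1 (volume_image_criticalSet hW),
    measure_eq_zero_iff_ae_notMem.1
      (((countable_not_continuousAt hU).image U).measure_zero volume)] with x hcrit hjump s hs
  have hcont : ContinuousAt U s := not_not.1 fun h => hjump ⟨s, h, hs⟩
  have hFcont : Tendsto (lengthClock U) (𝓝 s) (𝓝 (lengthClock U s)) :=
    (continuousAt_lengthClock_iff hU).2 hcont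
  have hsign : ∀ u v, SignType.sign (lengthClock U u - lengthClock U v) =
      SignType.sign (u - v) := fun u v => by
    rcases lt_trichotomy u v with h | rfl | h
    · rw [sign_neg (sub_neg.2 h), sign_neg (sub_neg.2 (hF h))]
    · rw [sub_self, sub_self]
    · rw [sign_pos (sub_pos.2 h), sign_pos (sub_pos.2 (hF h))]
  have hderiv : deriv (fun r => W r - U s) (lengthClock U s) ≠ 0 := by
    rw [deriv_sub_const]
    exact fun h => hcrit ⟨_, h, (hWF s).trans hs⟩
  have hzero : W (lengthClock U s) - U s = 0 := sub_eq_zero.2 (hWF s)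
  refine ⟨hcont, hderiv.lt_or_gt.symm.imp (fun h => ?_) fun h => ?_⟩
  · simpa only [hWF, hsign] using
      hFcont.eventually (eventually_nhdsWithin_sign_eq_of_deriv_pos h hzero)
  · simpa only [hWF, hsign] using
      hFcont.eventually (eventually_nhdsWithin_sign_eq_of_deriv_neg h hzero)

variable {U : ℝ → ℝ} {t T : ℝ} (hU : BoundedVariationOn U univ) (hVU : EqOn V U (Icc 0 T))
  (htT : t < T)
include hU hVU htT

lemma ae_incSet_union_decSet_eq :
    ∀ᵐ x, incSet V x t ∪ decSet V x t = Ioc 0 t ∩ V ⁻¹' {x} := by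
  filter_upwards [ae_continuousAt_and_eventually_sign hU] with x hx
  ext s
  refine ⟨?_, fun ⟨hs, hVs⟩ => ?_⟩
  · rintro (⟨hs, hinc⟩ | ⟨hs, hdec⟩)
    · exact ⟨hs, ((increasesThrough_iff_eventually_sign hs.1).1 hinc).1⟩
    · exact ⟨hs, ((decreasesThrough_iff_eventually_sign hs.1).1 hdec).1⟩
  · have hnhds : U =ᶠ[𝓝 s] V :=
      (hVU.eventuallyEq_of_mem (Icc_mem_nhds hs.1 (hs.2.trans_lt htT))).symm
    obtain ⟨hcont, hsign⟩ := hx s (hnhds.eq_of_nhds.trans hVs)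
    have hcontV := hcont.congr hnhds
    have htransfer : ∀ {σ : ℝ → SignType}, (∀ᶠ u in 𝓝 s, SignType.sign (U u - U s) = σ u) →
        ∀ᶠ u in 𝓝 s, SignType.sign (V u - V s) = σ u := fun h => by
      filter_upwards [h, hnhds] with u hu hUV
      rwa [← hUV, ← hnhds.eq_of_nhds]
    refine hsign.imp (fun h => ⟨hs, ?_⟩) fun h => ⟨hs, ?_⟩
    · exact (increasesThrough_iff_eventually_sign hs.1).2 ⟨hVs, hcontV, htransfer h⟩
    · exact (decreasesThrough_iff_eventually_sign hs.1).2 ⟨hVs, hcontV, htransfer h⟩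

lemma ae_encard_incSet_add_encard_decSet_eq :
    ∀ᵐ x, (((incSet V x t).encard + (decSet V x t).encard : ℕ∞) : ℝ≥0∞) =
      banachIndicatrix V (Ioc 0 t) x := by
  filter_upwards [ae_incSet_union_decSet_eq hU hVU htT] with x hx
  rw [← encard_union_eq (disjoint_incSet_decSet V x t), hx, banachIndicatrix]

end Passages

section LocalTime

variable {V : ℝ → ℝ} {t : ℝ} (hmeas : AEMeasurable (banachIndicatrix V (Ioc 0 t)))
  (hfin : ∫⁻ x, banachIndicatrix V (Ioc 0 t) x ≠ ∞)
  (hpassage : ∀ᵐ x, (((incSet V x t).encard + (decSet V x t).encard : ℕ∞) : ℝ≥0∞) =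
    banachIndicatrix V (Ioc 0 t) x)
include hmeas hfin hpassage

lemma ae_finite_incSet_and_finite_decSet :
    ∀ᵐ x, (incSet V x t).Finite ∧ (decSet V x t).Finite := by
  filter_upwards [hpassage, ae_lt_top' hmeas hfin] with x hx hlt
  have hsum : (incSet V x t).encard + (decSet V x t).encard ≠ ⊤ := fun h => by
    rw [← hx, h] at hlt
    exact hlt.ne rfl
  rw [← encard_ne_top_iff, ← encard_ne_top_iff]
  exact WithTop.add_ne_top.1 hsum

lemma ae_absLocalTime_eq_toReal_banachIndicatrix :
    ∀ᵐ x, (absLocalTime V x t : ℝ) = (banachIndicatrix V (Ioc 0 t) x).toReal := by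
  filter_upwards [hpassage, ae_finite_incSet_and_finite_decSet hmeas hfin hpassage]
    with x hx ⟨hinc, hdec⟩
  rw [← hx, ← hinc.cast_ncard_eq, ← hdec.cast_ncard_eq, absLocalTime]
  norm_cast

lemma integrable_absLocalTime : Integrable fun x => (absLocalTime V x t : ℝ) :=
  (integrable_toReal_of_lintegral_ne_top hmeas hfin).congr
    (.symm (ae_absLocalTime_eq_toReal_banachIndicatrix hmeas hfin hpassage))

lemma setIntegral_absLocalTime {A : Set ℝ} (hA : MeasurableSet A) :
    ∫ x in A, (absLocalTime V x t : ℝ) =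
      (∫⁻ x, banachIndicatrix V (Ioc 0 t ∩ V ⁻¹' A) x).toReal := by
  simp only [banachIndicatrix_inter_preimage]
  rw [integral_congr_ae (ae_restrict_of_ae
      (ae_absLocalTime_eq_toReal_banachIndicatrix hmeas hfin hpassage)),
    integral_toReal hmeas.restrict (ae_restrict_of_ae (ae_lt_top' hmeas hfin)),
    lintegral_indicator hA]

end LocalTime

lemma continuousPart_sub_eq {V Vm Vc Vd U : ℝ → ℝ} {T : ℝ}
    (hV_ll : ∀ s ∈ Ioi (0 : ℝ), Tendsto V (𝓝[<] s) (𝓝 (Vm s)))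
    (hdecomp : ∀ s ∈ Ici (0 : ℝ), V s = Vc s + Vd s)
    (hVd_sum : ∀ s ∈ Ici (0 : ℝ), HasSum (fun u : Ioc (0 : ℝ) s => V u - Vm u) (Vd s))
    (hUV : EqOn U V (Icc 0 T)) {c d : ℝ} (hc : 0 ≤ c) (hcd : c ≤ d) (hdT : d < T) :
    Vc d - Vc c = U d - U c - ∑' s : Ioc c d, (U s - U.leftLim s) := by
  have hd : 0 ≤ d := hc.trans hcd
  have hjump : ∀ s : Ioc c d, U s - U.leftLim s = V s - Vm s := fun s => by
    have hs : 0 < (s : ℝ) := hc.trans_lt s.2.1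
    have hnhds : U =ᶠ[𝓝 (s : ℝ)] V :=
      hUV.eventuallyEq_of_mem (Icc_mem_nhds hs (s.2.2.trans_lt hdT))
    rw [hnhds.eq_of_nhds, leftLim_eq_of_tendsto
      ((hV_ll s hs).congr' (hnhds.filter_mono nhdsWithin_le_nhds).symm)]
  rw [tsum_congr hjump, ← tsum_Ioc_sub_tsum_Ioc (f := fun u => V u - Vm u) hc hcd
    (hVd_sum d hd).summable, (hVd_sum d hd).tsum_eq, (hVd_sum c hc).tsum_eq,
    hUV ⟨hd, hdT.le⟩, hUV ⟨hc, hcd.trans hdT.le⟩, hdecomp d hd, hdecomp c hc]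
  ring

theorem lintegral_banachIndicatrix_inter_preimage_eq_totalVariation {U V : ℝ → ℝ} {a b : ℝ}
    (hU : BoundedVariationOn U univ) (hrc : ∀ s, ContinuousWithinAt U (Ici s) s)
    (hUV : EqOn U V (Ioc a b)) {μc : SignedMeasure ℝ} (hμc : ∀ c d, a ≤ c → c ≤ d → d ≤ b →
      μc (Ioc c d) = U d - U c - ∑' s : Ioc c d, (U s - U.leftLim s))
    {A : Set ℝ} (hA : MeasurableSet A) :
    MeasurableSet (Ioc a b ∩ V ⁻¹' A) ∧ AEMeasurable (banachIndicatrix V (Ioc a b ∩ V ⁻¹' A)) ∧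
      ∫⁻ x, banachIndicatrix V (Ioc a b ∩ V ⁻¹' A) x = μc.totalVariation (Ioc a b ∩ V ⁻¹' A) := by
  have hU_meas : Measurable U := measurable_of_countable_not_continuousAt
    (countable_not_continuousAt hU)
  have hE : MeasurableSet (Ioc a b ∩ V ⁻¹' A) :=
    hUV.inter_preimage_eq A ▸ measurableSet_Ioc.inter (hU_meas hA)
  have hindicatrix : banachIndicatrix V (Ioc a b ∩ V ⁻¹' A) =
      banachIndicatrix U (Ioc a b ∩ V ⁻¹' A) :=
    funext (banachIndicatrix_congr (hUV.symm.mono inter_subset_left))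
  rw [hindicatrix]
  exact ⟨hE, lintegral_banachIndicatrix_eq_totalVariation hU hrc hμc hE inter_subset_left⟩

/-- For a càdlàg function `V` on `[0,∞)` of finite variation on compacts,
with canonical decomposition `V = Vc + Vd`, and `μc` the signed Stieltjes measure of the
continuous part `Vc` (on `[0,t]`), the absolute occupation measure
`ϑ_t(A) = ∫_0^t 1_A(V s) |μc|(ds)` is absolutely continuous with respect to Lebesgue
measure, with density `x ↦ λ^x(t)`; in particular `λ^x(t)` is well defined for a.e. `x`
and `ϑ_t(A) = ∫_A λ^x(t) dx` for every Borel set `A`. -/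
theorem abs_occupation_density
    (V Vm Vc Vd : ℝ → ℝ)
    (hV_rc : ∀ s ∈ Set.Ici (0 : ℝ), ContinuousWithinAt V (Set.Ici s) s)
    (hV_ll : ∀ s ∈ Set.Ioi (0 : ℝ),
      Filter.Tendsto V (nhdsWithin s (Set.Iio s)) (nhds (Vm s)))
    (hV_bv : ∀ T : ℝ, BoundedVariationOn V (Set.Icc 0 T))
    (hdecomp : ∀ s ∈ Set.Ici (0 : ℝ), V s = Vc s + Vd s)
    (hVc_cont : ContinuousOn Vc (Set.Ici 0))
    (hVc_bv : ∀ T : ℝ, BoundedVariationOn Vc (Set.Icc 0 T))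
    (hVd_sum : ∀ s ∈ Set.Ici (0 : ℝ),
      HasSum (fun u : Set.Ioc (0 : ℝ) s => V u.1 - Vm u.1) (Vd s))
    (hVd_abs : ∀ s ∈ Set.Ici (0 : ℝ),
      Summable (fun u : Set.Ioc (0 : ℝ) s => |V u.1 - Vm u.1|))
    (t : ℝ) (ht : 0 < t)
    (μc : MeasureTheory.SignedMeasure ℝ)
    (hμc : ∀ a b : ℝ, 0 ≤ a → a ≤ b → b ≤ t → μc (Set.Ioc a b) = Vc b - Vc a) :
    (∀ᵐ x : ℝ ∂volume, (incSet V x t).Finite ∧ (decSet V x t).Finite) ∧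
      MeasureTheory.Integrable (fun x : ℝ => (absLocalTime V x t : ℝ)) volume ∧
      ∀ A : Set ℝ, MeasurableSet A →
        ∫ s in Set.Ioc (0 : ℝ) t, A.indicator (fun _ => (1 : ℝ)) (V s)
            ∂μc.totalVariation =
          ∫ x in A, (absLocalTime V x t : ℝ) ∂volume := by
  obtain ⟨U, hU, hU_rc, hUV⟩ := exists_boundedVariationOn_univ_extension
    (by positivity : 0 ≤ t + 1) (hV_bv (t + 1))
    fun s hs => (hV_rc s hs.1).mono Icc_subset_Ici_self
  have hμcU : ∀ c d, 0 ≤ c → c ≤ d → d ≤ t →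
      μc (Ioc c d) = U d - U c - ∑' s : Ioc c d, (U s - U.leftLim s) := fun c d hc hcd hdt =>
    (hμc c d hc hcd hdt).trans (continuousPart_sub_eq hV_ll hdecomp hVd_sum hUV
      hc hcd (hdt.trans_lt (lt_add_one t)))
  have hUV' : EqOn U V (Ioc 0 t) :=
    hUV.mono (Ioc_subset_Icc_self.trans (Icc_subset_Icc_right (lt_add_one t).le))
  have hoccupation := fun {A : Set ℝ} (hA : MeasurableSet A) =>
    lintegral_banachIndicatrix_inter_preimage_eq_totalVariation hU hU_rc hUV' hμcU hA
  obtain ⟨-, hmeas, hmass⟩ := hoccupation MeasurableSet.univ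
  rw [preimage_univ, inter_univ] at hmeas hmass
  have hfin : ∫⁻ x, banachIndicatrix V (Ioc 0 t) x ≠ ∞ := hmass ▸ measure_ne_top _ _
  have hpassage := ae_encard_incSet_add_encard_decSet_eq hU hUV.symm (lt_add_one t)
  refine ⟨ae_finite_incSet_and_finite_decSet hmeas hfin hpassage,
    integrable_absLocalTime hmeas hfin hpassage, fun A hA => ?_⟩
  obtain ⟨hE, -, hmassA⟩ := hoccupation hA
  rw [setIntegral_absLocalTime hmeas hfin hpassage hA, hmassA,
    setIntegral_indicator_one_comp measurableSet_Ioc hE, Measure.real]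
end
end

section
/- Let V : [0,∞) → ℝ be a right-continuous function with left limits, of finite variation on every compact interval, and let t > 0. Then the function x ↦ ℓ^x(t), defined for Lebesgue-almost every x ∈ ℝ (namely, at every simple level x with x ≠ V(0) and x ≠ V(t)), is Lebesgue-measurable and belongs to L¹(dx). -/
open MeasureTheory Set Filter
open scoped ENNReal NNReal

noncomputable section

open scoped Topology

/-!
Let `D` be the set of times in `(0, t)` at which `V` increases. At each of them `V` stays strictly
below its value before and strictly above it afterwards, within some interval with rational
endpoints; so `D` is a countable disjoint union of measurable sets `Dₙ` on which `V` is injective,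
and the number of `s ∈ D` with `V s = x` is `∑ₙ 𝟙[x ∈ V(Dₙ)]`, where `V(Dₙ)` is Borel by
Lusin–Souslin. Integrability comes from the variation function `v` of `V`: distances between values
of `V` are at most those between values of `v`, and `v` is strictly increasing on `D`. Hence
`∑ₙ |V(Dₙ)| ≤ ∑ₙ |v(Dₙ)| = |v(D)|`, which is at most the variation of `V` on `[0, t]`. Restricting
to `(0, t)` only affects the level `V t`, and decreasing passages of `V` are increasing passages
of `-V`.
-/

theorem toReal_count_eq_ncard {α : Type*} [MeasurableSpace α] [MeasurableSingletonClass α]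
    (s : Set α) : (Measure.count s).toReal = s.ncard := by
  obtain hs | hs := s.finite_or_infinite
  · rw [Measure.count_apply hs.measurableSet, ← hs.cast_ncard_eq]; simp
  · simp [Measure.count_apply_infinite hs, hs.ncard]

section PiecewiseInjOn

variable {α β : Type*} [MeasurableSpace α] {f : α → β} {D : Set α}

/-- `f` is piecewise injective on `D`: the set `D` splits into countably many disjoint measurable
pieces, on each of which `f` is injective. For such `D` the number of preimages
`y ↦ #(D ∩ f ⁻¹' {y})` is a countable sum of indicators of images of measurable sets. -/
def PiecewiseInjOn (f : α → β) (D : Set α) : Prop :=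
  ∃ E : ℕ → Set α, (∀ n, MeasurableSet (E n)) ∧ Pairwise (Function.onFun Disjoint E) ∧
    (∀ n, InjOn f (E n)) ∧ ⋃ n, E n = D

theorem PiecewiseInjOn.of_subset_iUnion {ι : Type*} [Countable ι] [Nonempty ι] {P : ι → Set α}
    (hD : MeasurableSet D) (hP : ∀ i, MeasurableSet (P i)) (hinj : ∀ i, InjOn f (P i))
    (hDP : D ⊆ ⋃ i, P i) : PiecewiseInjOn f D := by
  obtain ⟨e, he⟩ := exists_surjective_nat ι
  refine ⟨fun n ↦ D ∩ disjointed (P ∘ e) n,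
    fun n ↦ hD.inter (.disjointed (fun k ↦ hP (e k)) n),
    fun m n hmn ↦ (disjoint_disjointed (P ∘ e) hmn).mono inter_subset_right inter_subset_right,
    fun n ↦ (hinj (e n)).mono (inter_subset_right.trans (disjointed_subset (P ∘ e) n)), ?_⟩
  rw [← inter_iUnion, iUnion_disjointed]
  exact inter_eq_left.2 (he.iUnion_comp P ▸ hDP)

theorem count_inter_preimage_singleton_of_injOn [MeasurableSingletonClass α] (hf : InjOn f D)
    (y : β) : Measure.count (D ∩ f ⁻¹' {y}) = (f '' D).indicator 1 y := by
  by_cases hy : y ∈ f '' D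
  · obtain ⟨a, ha, rfl⟩ := hy
    have hfiber : D ∩ f ⁻¹' {f a} = {a} :=
      Subset.antisymm (fun b hb ↦ hf hb.1 ha hb.2) (singleton_subset_iff.2 ⟨ha, rfl⟩)
    simp [hfiber, mem_image_of_mem f ha]
  · have hfiber : D ∩ f ⁻¹' {y} = ∅ :=
      eq_empty_of_forall_notMem fun b hb ↦ hy ⟨b, hb.1, hb.2⟩
    simp [hfiber, hy]

theorem count_iUnion_inter_preimage_singleton [MeasurableSingletonClass α] {E : ℕ → Set α}
    (hE : Pairwise (Function.onFun Disjoint E)) (hinj : ∀ n, InjOn f (E n)) (y : β) :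
    Measure.count ((⋃ n, E n) ∩ f ⁻¹' {y}) = ∑' n, (f '' E n).indicator 1 y := by
  have hsub (n : ℕ) : (E n ∩ f ⁻¹' {y}).Subsingleton :=
    fun a ha b hb ↦ hinj n ha.1 hb.1 (ha.2.trans hb.2.symm)
  rw [iUnion_inter, measure_iUnion
    (fun m n hmn ↦ (hE hmn).mono inter_subset_left inter_subset_left)
    fun n ↦ (hsub n).measurableSet]
  exact tsum_congr fun n ↦ count_inter_preimage_singleton_of_injOn (hinj n) y

variable [StandardBorelSpace α] [MeasurableSpace β] [MeasurableSpace.CountablySeparated β]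

theorem PiecewiseInjOn.measurable_count_inter_preimage (hD : PiecewiseInjOn f D)
    (hf : Measurable f) :
    Measurable fun y ↦ Measure.count (D ∩ f ⁻¹' {y}) := by
  obtain ⟨E, hEm, hE, hinj, rfl⟩ := hD
  simp_rw [count_iUnion_inter_preimage_singleton hE hinj]
  exact .tsum fun n ↦
    measurable_one.indicator ((hEm n).image_of_measurable_injOn hf (hinj n))

end PiecewiseInjOn

section Domination

variable {α X Y : Type*} [EMetricSpace X] [MeasurableSpace X] [BorelSpace X]
  [EMetricSpace Y] [MeasurableSpace Y] [BorelSpace Y] {f : α → X} {g : α → Y} {s D : Set α} {d : ℝ}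

theorem hausdorffMeasure_image_le_of_edist_le (hd : 0 ≤ d)
    (hfg : ∀ a ∈ s, ∀ b ∈ s, edist (f a) (f b) ≤ edist (g a) (g b)) :
    μH[d] (f '' s) ≤ μH[d] (g '' s) := by
  obtain rfl | ⟨a₀, -⟩ := s.eq_empty_or_nonempty
  · simp
  have : Nonempty α := ⟨a₀⟩
  choose! φ hφs hgφ using fun y (hy : y ∈ g '' s) ↦ hy
  have hlip : LipschitzOnWith 1 (f ∘ φ) (g '' s) := fun y hy z hz ↦ by
    simpa [hgφ y hy, hgφ z hz] using hfg _ (hφs y hy) _ (hφs z hz)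
  have hfφ : EqOn (f ∘ φ ∘ g) f s := fun a ha ↦ by
    have hga := mem_image_of_mem g ha
    simpa [hgφ _ hga] using hfg _ (hφs _ hga) _ ha
  calc μH[d] (f '' s) = μH[d] ((f ∘ φ) '' (g '' s)) := by
        rw [← image_comp, Function.comp_assoc, hfφ.image_eq]
    _ ≤ μH[d] (g '' s) := by simpa using hlip.hausdorffMeasure_image_le hd

/-- If `g` is injective, distinct pieces of `D` have disjoint `g`-images, so the measures of their
`f`-images add up to at most the measure of `g '' D`. -/
theorem PiecewiseInjOn.lintegral_count_inter_preimage_le [MeasurableSpace α] [StandardBorelSpace α]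
    [MeasurableSpace.CountablySeparated X] [MeasurableSpace.CountablySeparated Y]
    (hD : PiecewiseInjOn f D) (hf : Measurable f) (hg : Measurable g) (hgD : InjOn g D)
    (hd : 0 ≤ d) (hfg : ∀ a ∈ D, ∀ b ∈ D, edist (f a) (f b) ≤ edist (g a) (g b)) :
    ∫⁻ y, Measure.count (D ∩ f ⁻¹' {y}) ∂μH[d] ≤ μH[d] (g '' D) := by
  obtain ⟨E, hEm, hE, hinj, rfl⟩ := hD
  have hsub := subset_iUnion E
  have hfE (n : ℕ) : MeasurableSet (f '' E n) := (hEm n).image_of_measurable_injOn hf (hinj n)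
  have hgE (n : ℕ) : MeasurableSet (g '' E n) :=
    (hEm n).image_of_measurable_injOn hg (hgD.mono (hsub n))
  calc ∫⁻ y, Measure.count ((⋃ n, E n) ∩ f ⁻¹' {y}) ∂μH[d]
      = ∫⁻ y, ∑' n, (f '' E n).indicator 1 y ∂μH[d] := by
        simp_rw [count_iUnion_inter_preimage_singleton hE hinj]
    _ = ∑' n, μH[d] (f '' E n) := by
        rw [lintegral_tsum fun n ↦ (measurable_one.indicator (hfE n)).aemeasurable]
        simp_rw [lintegral_indicator_one (hfE _)]
    _ ≤ ∑' n, μH[d] (g '' E n) := ENNReal.tsum_le_tsum fun n ↦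
        hausdorffMeasure_image_le_of_edist_le hd
          fun a ha b hb ↦ hfg a (hsub n ha) b (hsub n hb)
    _ = μH[d] (g '' ⋃ n, E n) := by
        rw [image_iUnion, measure_iUnion
          (fun m n hmn ↦ (hE hmn).image hgD (hsub m) (hsub n)) hgE]

end Domination

section IncreasePoints

/-- The points of increase of `f`: points of continuity `s` such that `f < f s` just before `s` and
`f s < f` just after `s`. -/
def increasePoints (f : ℝ → ℝ) : Set ℝ :=
  {s | ContinuousAt f s ∧ (∀ᶠ r in 𝓝[<] s, f r < f s) ∧ ∀ᶠ r in 𝓝[>] s, f s < f r}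

/-- The points `s` of `U` such that, within `U`, `f < f s` before `s` and `f s < f` after `s`. A
point of increase has this property for some interval `U` with rational endpoints. -/
def increasePointsWithin {α β : Type*} [Preorder α] [Preorder β] (f : α → β) (U : Set α) : Set α :=
  {s ∈ U | (∀ r ∈ U, r < s → f r < f s) ∧ ∀ r ∈ U, s < r → f s < f r}

theorem strictMonoOn_increasePointsWithin {α β : Type*} [Preorder α] [Preorder β] (f : α → β)
    (U : Set α) : StrictMonoOn f (increasePointsWithin f U) :=
  fun _ hr s hs hrs ↦ hr.2.2 s hs.1 hrs

section Measurability

variable {α β : Type*}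
  [LinearOrder α] [DenselyOrdered α] [TopologicalSpace α] [OrderTopology α]
  [SecondCountableTopology α] [MeasurableSpace α] [BorelSpace α]
  [LinearOrder β] [TopologicalSpace β] [OrderTopology β]
  [MeasurableSpace β] [BorelSpace β] {f : α → β}

theorem measurableSet_setOf_forall_lt_imp_lt (hf : Measurable f) (U : Set α) :
    MeasurableSet {s | ∀ r ∈ U, r < s → f r < f s} := by
  obtain ⟨Q, hQ, hQd⟩ := TopologicalSpace.exists_countable_dense α
  have hcompl : {s | ∀ r ∈ U, r < s → f r < f s}ᶜ =
      ⋃ q ∈ Q, Ioi q ∩ f ⁻¹' lowerClosure (f '' (U ∩ Iio q)) := by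
    ext s
    simp only [mem_compl_iff, mem_ofPred_eq, mem_iUnion, mem_inter_iff, mem_Ioi, mem_preimage,
      SetLike.mem_coe, mem_lowerClosure, exists_mem_image, not_forall, not_lt, exists_prop, mem_Iio]
    constructor
    · rintro ⟨r, hr, hrs, hle⟩
      obtain ⟨q, hq, hrq, hqs⟩ := hQd.exists_between hrs
      exact ⟨q, hq, hqs, r, ⟨hr, hrq⟩, hle⟩
    · rintro ⟨q, -, hqs, r, ⟨hr, hrq⟩, hle⟩
      exact ⟨r, hr, hrq.trans hqs, hle⟩
  rw [← MeasurableSet.compl_iff, hcompl]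
  exact .biUnion hQ fun q _ ↦
    measurableSet_Ioi.inter (hf (LowerSet.lower _).ordConnected.measurableSet)

theorem measurableSet_increasePointsWithin (hf : Measurable f) {U : Set α} (hU : MeasurableSet U) :
    MeasurableSet (increasePointsWithin f U) :=
  hU.inter ((measurableSet_setOf_forall_lt_imp_lt hf U).inter
    (measurableSet_setOf_forall_lt_imp_lt (α := αᵒᵈ) (β := βᵒᵈ) hf U))

end Measurability

variable {f g : ℝ → ℝ}

theorem increasePoints_eq_inter_iUnion (f : ℝ → ℝ) :
    increasePoints f =
      {s | ContinuousAt f s} ∩ ⋃ p : ℚ × ℚ, increasePointsWithin f (Ioo (p.1 : ℝ) p.2) := by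
  refine Set.ext fun s ↦ and_congr_right fun _ ↦ ?_
  rw [mem_iUnion, (nhdsLT_basis s).eventually_iff, (nhdsGT_basis s).eventually_iff]
  constructor
  · rintro ⟨⟨l, hl, hbefore⟩, u, hu, hafter⟩
    obtain ⟨p, hlp, hps⟩ := exists_rat_btwn hl
    obtain ⟨q, hsq, hqu⟩ := exists_rat_btwn hu
    exact ⟨(p, q), ⟨hps, hsq⟩, fun r hr hrs ↦ hbefore ⟨hlp.trans hr.1, hrs⟩,
      fun r hr hsr ↦ hafter ⟨hsr, hr.2.trans hqu⟩⟩
  · rintro ⟨p, ⟨hps, hsq⟩, hbefore, hafter⟩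
    exact ⟨⟨p.1, hps, fun r hr ↦ hbefore r ⟨hr.1, hr.2.trans hsq⟩ hr.2⟩,
      p.2, hsq, fun r hr ↦ hafter r ⟨hps.trans hr.1, hr.2⟩ hr.1⟩

theorem measurableSet_increasePoints (hf : Measurable f) : MeasurableSet (increasePoints f) := by
  rw [increasePoints_eq_inter_iUnion]
  exact (IsGδ.setOfPred_continuousAt f).measurableSet.inter
    (.iUnion fun _ ↦ measurableSet_increasePointsWithin hf measurableSet_Ioo)

theorem piecewiseInjOn_of_subset_increasePoints (hf : Measurable f) {D : Set ℝ}
    (hD : MeasurableSet D) (hDf : D ⊆ increasePoints f) : PiecewiseInjOn f D :=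
  .of_subset_iUnion hD (fun _ ↦ measurableSet_increasePointsWithin hf measurableSet_Ioo)
    (fun _ ↦ (strictMonoOn_increasePointsWithin f _).injOn)
    (hDf.trans (increasePoints_eq_inter_iUnion f ▸ inter_subset_right))

theorem mem_increasePoints_congr {s : ℝ} (hfg : f =ᶠ[𝓝 s] g) :
    s ∈ increasePoints f ↔ s ∈ increasePoints g := by
  have hlt : ∀ᶠ r in 𝓝[<] s, f r = g r := hfg.filter_mono nhdsWithin_le_nhds
  have hgt : ∀ᶠ r in 𝓝[>] s, f r = g r := hfg.filter_mono nhdsWithin_le_nhds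
  refine and_congr (continuousAt_congr hfg) (and_congr ?_ ?_)
  · exact eventually_congr (hlt.mono fun r hr ↦ by rw [hr, hfg.self_of_nhds])
  · exact eventually_congr (hgt.mono fun r hr ↦ by rw [hr, hfg.self_of_nhds])

end IncreasePoints

section BoundedVariation

section General

variable {α E : Type*} [LinearOrder α]

theorem boundedVariationOn_neg [SeminormedAddCommGroup E] {f : α → E} {s : Set α}
    (hf : BoundedVariationOn f s) : BoundedVariationOn (fun r ↦ -f r) s :=
  (LipschitzWith.id.neg : LipschitzWith 1 fun y : E ↦ -y).comp_boundedVariationOn hf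

theorem measurable_of_locallyBoundedVariationOn_univ [TopologicalSpace α] [OrderClosedTopology α]
    [MeasurableSpace α] [BorelSpace α] {f : α → ℝ} (hf : LocallyBoundedVariationOn f univ) :
    Measurable f := by
  obtain ⟨p, q, hp, hq, rfl⟩ := hf.exists_monotoneOn_sub_monotoneOn
  exact (monotoneOn_univ.1 hp).measurable.sub (monotoneOn_univ.1 hq).measurable

variable [PseudoEMetricSpace E] {f : α → E} {S : Set α} {a b : α}

theorem edist_le_edist_variationOnFromTo (hf : LocallyBoundedVariationOn f S) (ha : a ∈ S) {r s : α}
    (hr : r ∈ S) (hs : s ∈ S) :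
    edist (f r) (f s) ≤ edist (variationOnFromTo f S a r) (variationOnFromTo f S a s) := by
  wlog hrs : r ≤ s generalizing r s
  · simpa only [edist_comm] using this hs hr (le_of_not_ge hrs)
  calc edist (f r) (f s) ≤ eVariationOn f (S ∩ Icc r s) :=
        eVariationOn.edist_le f ⟨hr, left_mem_Icc.2 hrs⟩ ⟨hs, right_mem_Icc.2 hrs⟩
    _ = ENNReal.ofReal (variationOnFromTo f S r s) := by
        rw [variationOnFromTo.eq_of_le f S hrs, ENNReal.ofReal_toReal (hf r s hr hs)]
    _ = edist (variationOnFromTo f S a r) (variationOnFromTo f S a s) := by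
        rw [edist_comm, edist_dist, Real.dist_eq, variationOnFromTo.sub_right hf ha hs hr,
          abs_of_nonneg (variationOnFromTo.nonneg_of_le f S hrs)]

theorem volume_image_variationOnFromTo_le (hf : LocallyBoundedVariationOn f S) (ha : a ∈ S)
    (hb : b ∈ S) (hab : a ≤ b) :
    volume (variationOnFromTo f S a '' (S ∩ Icc a b)) ≤ eVariationOn f (S ∩ Icc a b) := by
  have hmono := variationOnFromTo.monotoneOn hf ha
  calc volume (variationOnFromTo f S a '' (S ∩ Icc a b))
      ≤ volume (Icc (variationOnFromTo f S a a) (variationOnFromTo f S a b)) :=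
        measure_mono <| image_subset_iff.2 fun r ⟨hrS, har, hrb⟩ ↦
          ⟨hmono ha hrS har, hmono hrS hb hrb⟩
    _ = eVariationOn f (S ∩ Icc a b) := by
        rw [Real.volume_Icc, variationOnFromTo.self, sub_zero,
          variationOnFromTo.eq_of_le f S hab, ENNReal.ofReal_toReal (hf a b ha hb)]

theorem exists_locallyBoundedVariationOn_univ_eqOn (hab : a ≤ b)
    (hf : BoundedVariationOn f (Icc a b)) :
    ∃ g, LocallyBoundedVariationOn g univ ∧ EqOn f g (Icc a b) := by
  refine ⟨fun s ↦ f (projIcc a b hab s), BoundedVariationOn.locallyBoundedVariationOn ?_,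
    fun s hs ↦ by simp only [projIcc_of_mem hab hs]⟩
  exact ne_top_of_le_ne_top hf <| eVariationOn.comp_le_of_monotoneOn f
    (fun s ↦ (projIcc a b hab s : α)) (fun _ _ _ _ hrs ↦ monotone_projIcc hab hrs)
    fun s _ ↦ (projIcc a b hab s).2

end General

variable {f : ℝ → ℝ} {a b : ℝ}

theorem strictMonoOn_variationOnFromTo_increasePoints (hf : LocallyBoundedVariationOn f univ)
    (a : ℝ) : StrictMonoOn (variationOnFromTo f univ a) (increasePoints f) := by
  intro r hr s _ hrs
  obtain ⟨u, hfu, hru, hus⟩ := (hr.2.2.and (Ioo_mem_nhdsGT hrs)).exists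
  have hincr := variationOnFromTo.abs_sub_le_sub_of_le hf (mem_univ a) (mem_univ r)
    (mem_univ u) hru.le
  have hmono := variationOnFromTo.monotoneOn hf (mem_univ a) (mem_univ u) (mem_univ s) hus.le
  linarith [le_abs_self (f u - f r)]

theorem increasePoints_inter_preimage_congr {g : ℝ → ℝ} (hfg : EqOn f g (Icc a b)) (x : ℝ) :
    increasePoints f ∩ Ioo a b ∩ f ⁻¹' {x} = increasePoints g ∩ Ioo a b ∩ g ⁻¹' {x} := by
  ext s
  simp only [mem_inter_iff, mem_preimage, and_assoc]
  rw [and_left_comm, and_left_comm (b := s ∈ Ioo a b)]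
  refine and_congr_right fun hs ↦ ?_
  rw [mem_increasePoints_congr (hfg.eventuallyEq_of_mem (Icc_mem_nhds hs.1 hs.2)),
    hfg (Ioo_subset_Icc_self hs)]

theorem piecewiseInjOn_increasePoints_inter_Ioo (hf : Measurable f) :
    PiecewiseInjOn f (increasePoints f ∩ Ioo a b) :=
  piecewiseInjOn_of_subset_increasePoints hf
    ((measurableSet_increasePoints hf).inter measurableSet_Ioo) inter_subset_left

theorem measurable_count_increasePoints_inter_preimage (hab : a ≤ b)
    (hf : BoundedVariationOn f (Icc a b)) :
    Measurable fun x ↦ Measure.count (increasePoints f ∩ Ioo a b ∩ f ⁻¹' {x}) := by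
  obtain ⟨g, hg, hfg⟩ := exists_locallyBoundedVariationOn_univ_eqOn hab hf
  have hgm := measurable_of_locallyBoundedVariationOn_univ hg
  simp_rw [increasePoints_inter_preimage_congr hfg]
  exact (piecewiseInjOn_increasePoints_inter_Ioo hgm).measurable_count_inter_preimage hgm

theorem lintegral_count_increasePoints_inter_preimage_le (hab : a ≤ b)
    (hf : BoundedVariationOn f (Icc a b)) :
    ∫⁻ x, Measure.count (increasePoints f ∩ Ioo a b ∩ f ⁻¹' {x}) ≤ eVariationOn f (Icc a b) := by
  obtain ⟨g, hg, hfg⟩ := exists_locallyBoundedVariationOn_univ_eqOn hab hf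
  have hgm := measurable_of_locallyBoundedVariationOn_univ hg
  have hvm : Measurable (variationOnFromTo g univ a) :=
    (monotoneOn_univ.1 (variationOnFromTo.monotoneOn hg (mem_univ a))).measurable
  have hvinj := (strictMonoOn_variationOnFromTo_increasePoints hg a).injOn
  simp_rw [increasePoints_inter_preimage_congr hfg, eVariationOn.congr hfg]
  calc ∫⁻ x, Measure.count (increasePoints g ∩ Ioo a b ∩ g ⁻¹' {x})
      ≤ volume (variationOnFromTo g univ a '' (increasePoints g ∩ Ioo a b)) := by
        rw [← hausdorffMeasure_real]
        exact (piecewiseInjOn_increasePoints_inter_Ioo hgm).lintegral_count_inter_preimage_le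
          hgm hvm (hvinj.mono inter_subset_left) zero_le_one fun r _ s _ ↦
            edist_le_edist_variationOnFromTo hg (mem_univ a) (mem_univ r) (mem_univ s)
    _ ≤ volume (variationOnFromTo g univ a '' Icc a b) :=
        measure_mono (image_mono (inter_subset_right.trans Ioo_subset_Icc_self))
    _ ≤ eVariationOn g (Icc a b) := by
        simpa using volume_image_variationOnFromTo_le hg (mem_univ a) (mem_univ b) hab

end BoundedVariation

section LocalTime

variable {V : ℝ → ℝ} {x s t : ℝ}

theorem increasesThrough_iff : IncreasesThrough V x s ↔ 0 < s ∧ s ∈ increasePoints V ∧ V s = x := by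
  refine and_congr_right fun hs ↦ ?_
  have hnear : 𝓝[Ici 0] s = 𝓝 s := nhdsWithin_eq_nhds.2 (Ici_mem_nhds hs)
  have hsign : (∃ ε > 0, ∀ r ∈ Ici (0 : ℝ), |r - s| < ε →
        (r < s → V r < V s) ∧ (s < r → V s < V r)) ↔
      (∀ᶠ r in 𝓝[<] s, V r < V s) ∧ ∀ᶠ r in 𝓝[>] s, V s < V r := by
    simp only [eventually_nhdsWithin_iff, mem_Iio, mem_Ioi, ← eventually_and]
    rw [← hnear, Metric.nhdsWithin_basis_ball.eventually_iff]
    simp only [mem_inter_iff, Metric.mem_ball, Real.dist_eq, and_imp, imp.swap (a := _ ∈ Ici _)]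
  rw [ContinuousWithinAt, hnear, hsign, and_comm]
  rfl

theorem incSet_eq_inter_preimage (hx : x ≠ V t) :
    incSet V x t = increasePoints V ∩ Ioo 0 t ∩ V ⁻¹' {x} := by
  ext s
  simp only [incSet, increasesThrough_iff, mem_ofPred_eq, mem_inter_iff, mem_preimage,
    mem_singleton_iff, mem_Ioc, mem_Ioo]
  constructor
  · rintro ⟨⟨hs, hst⟩, -, hinc, rfl⟩
    exact ⟨⟨hinc, hs, hst.lt_of_ne fun h ↦ hx (h ▸ rfl)⟩, rfl⟩
  · rintro ⟨⟨hinc, hs, hst⟩, rfl⟩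
    exact ⟨⟨hs, hst.le⟩, hs, hinc, rfl⟩

theorem ae_incSet_eq_inter_preimage (V : ℝ → ℝ) (t : ℝ) :
    ∀ᵐ x, incSet V x t = increasePoints V ∩ Ioo 0 t ∩ V ⁻¹' {x} :=
  (Measure.ae_ne volume (V t)).mono fun _ ↦ incSet_eq_inter_preimage

theorem ae_finite_incSet (ht : 0 ≤ t) (hV : BoundedVariationOn V (Icc 0 t)) :
    ∀ᵐ x, (incSet V x t).Finite := by
  have hfin := ae_lt_top (measurable_count_increasePoints_inter_preimage ht hV)
    (ne_top_of_le_ne_top hV (lintegral_count_increasePoints_inter_preimage_le ht hV))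
  filter_upwards [hfin, ae_incSet_eq_inter_preimage V t] with x hx hinc
  exact hinc ▸ Measure.count_apply_lt_top.1 hx

theorem integrable_ncard_incSet (ht : 0 ≤ t) (hV : BoundedVariationOn V (Icc 0 t)) :
    Integrable fun x ↦ ((incSet V x t).ncard : ℝ) := by
  refine (integrable_toReal_of_lintegral_ne_top
    (measurable_count_increasePoints_inter_preimage ht hV).aemeasurable
    (ne_top_of_le_ne_top hV (lintegral_count_increasePoints_inter_preimage_le ht hV))).congr ?_
  filter_upwards [ae_incSet_eq_inter_preimage V t] with x hinc
  rw [hinc, toReal_count_eq_ncard]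

theorem decSet_eq_incSet_neg (V : ℝ → ℝ) (x t : ℝ) :
    decSet V x t = incSet (fun s ↦ -V s) (-x) t := rfl

theorem ae_finite_decSet (ht : 0 ≤ t) (hV : BoundedVariationOn V (Icc 0 t)) :
    ∀ᵐ x, (decSet V x t).Finite :=
  (Measure.measurePreserving_neg volume).quasiMeasurePreserving.ae
    (ae_finite_incSet ht (boundedVariationOn_neg hV))

theorem integrable_ncard_decSet (ht : 0 ≤ t) (hV : BoundedVariationOn V (Icc 0 t)) :
    Integrable fun x ↦ ((decSet V x t).ncard : ℝ) :=
  (integrable_ncard_incSet ht (boundedVariationOn_neg hV)).comp_neg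

theorem signedLocalTime_integrable_general (ht : 0 ≤ t) (hV : BoundedVariationOn V (Icc 0 t)) :
    (∀ᵐ x, (incSet V x t).Finite ∧ (decSet V x t).Finite) ∧
      AEMeasurable (fun x ↦ (signedLocalTime V x t : ℝ)) ∧
      Integrable fun x ↦ (signedLocalTime V x t : ℝ) := by
  have hint : Integrable fun x ↦ (signedLocalTime V x t : ℝ) := by
    simp only [signedLocalTime, Int.cast_sub, Int.cast_natCast]
    exact (integrable_ncard_incSet ht hV).sub (integrable_ncard_decSet ht hV)
  exact ⟨(ae_finite_incSet ht hV).and (ae_finite_decSet ht hV), hint.aemeasurable, hint⟩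

end LocalTime

/-- Let `V` be càdlàg on `[0,∞)` with finite variation on compacts and
`t > 0`. The function `x ↦ ℓ^x(t)` (defined for Lebesgue-almost every `x`, in particular
at every simple level `x` with `x ≠ V 0`, `x ≠ V t`) is Lebesgue-measurable and belongs
to `L¹(dx)`: it is a.e. well defined, a.e.-measurable, and integrable. -/
theorem signedLocalTime_integrable
    (V Vm : ℝ → ℝ)
    (hV_rc : ∀ s ∈ Set.Ici (0 : ℝ), ContinuousWithinAt V (Set.Ici s) s)
    (hV_ll : ∀ s ∈ Set.Ioi (0 : ℝ),
      Filter.Tendsto V (nhdsWithin s (Set.Iio s)) (nhds (Vm s)))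
    (hV_bv : ∀ T : ℝ, BoundedVariationOn V (Set.Icc 0 T))
    (t : ℝ) (ht : 0 < t) :
    (∀ᵐ x : ℝ ∂volume, (incSet V x t).Finite ∧ (decSet V x t).Finite) ∧
      AEMeasurable (fun x : ℝ => (signedLocalTime V x t : ℝ)) volume ∧
      MeasureTheory.Integrable (fun x : ℝ => (signedLocalTime V x t : ℝ)) volume :=
  signedLocalTime_integrable_general ht.le (hV_bv t)
end
end
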